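/- Let k ≥ 1 be a fixed integer and let K_n, P_n, p_n be scalings with K_n ≥ 2 for all sufficiently large n and K_n²/P_n = o(1). Define α_n by p_e = (ln n + (k−1)·ln ln n + α_n)/n. Assume that either there exists ε > 0 with n·p_e > ε for all sufficiently large n, or lim_{n→∞} n·p_e = 0. If lim_{n→∞} α_n = −∞, then P[𝔾_on(n,K_n,P_n,p_n) is k-connected] → 0 and P[the minimum vertex degree of 𝔾_on(n,K_n,P_n,p_n) is at least k] → 0 as n → ∞. -/

import Mathlib

open MeasureTheory Filter Asymptotics
open scoped ENNReal

noncomputable section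

/-- Key rings: `K`-element subsets of a key pool of size `P`. -/
abbrev KeyRing (P K : ℕ) : Type := {s : Finset (Fin P) // s.card = K}

instance (P K : ℕ) : MeasurableSpace (KeyRing P K) := ⊤

/-- The uniform probability measure on key rings. -/
def uniformKeyMeasure (P K : ℕ) : Measure (KeyRing P K) :=
  (Fintype.card (KeyRing P K) : ℝ≥0∞)⁻¹ • (Measure.count : Measure (KeyRing P K))

/-- The Bernoulli measure with parameter `p` on `Bool`. -/
def bern (p : ℝ) : Measure Bool :=
  ENNReal.ofReal p • Measure.dirac true + ENNReal.ofReal (1 - p) • Measure.dirac false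

/-- Sample space underlying `𝔾_on(n, K, P, p)`: independent key rings for the `n`
nodes together with independent on/off channel states for each pair of nodes. -/
abbrev GonSpace (n K P : ℕ) : Type :=
  (Fin n → KeyRing P K) × (Sym2 (Fin n) → Bool)

/-- The probability measure of the model `𝔾_on(n, K, P, p)`: the key rings of the
`n` nodes are independent and uniform, and the channels are independent
Bernoulli(`p`) variables, independent of the key rings. -/
def gonMeasure (n K P : ℕ) (p : ℝ) : Measure (GonSpace n K P) :=
  (Measure.pi fun _ : Fin n => uniformKeyMeasure P K).prod
    (Measure.pi fun _ : Sym2 (Fin n) => bern p)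

/-- The random graph `𝔾_on`: an edge is present iff the key rings intersect and the
channel between the two nodes is on. -/
def gonGraph {n K P : ℕ} (ω : GonSpace n K P) : SimpleGraph (Fin n) where
  Adj i j := i ≠ j ∧ ((ω.1 i).1 ∩ (ω.1 j).1).Nonempty ∧ ω.2 s(i, j) = true
  symm := by
    constructor
    rintro i j ⟨h1, h2, h3⟩
    exact ⟨h1.symm, by rwa [Finset.inter_comm], by rwa [Sym2.eq_swap]⟩
  loopless := ⟨fun i h => h.1 rfl⟩

/-- The random key graph `G(n, K, P)`: an edge is present iff the key rings intersect. -/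
def rkgGraph {n K P : ℕ} (ω : Fin n → KeyRing P K) : SimpleGraph (Fin n) where
  Adj i j := i ≠ j ∧ ((ω i).1 ∩ (ω j).1).Nonempty
  symm := by
    constructor
    rintro i j ⟨h1, h2⟩
    exact ⟨h1.symm, by rwa [Finset.inter_comm]⟩
  loopless := ⟨fun i h => h.1 rfl⟩

/-- The probability measure of the random key graph model. -/
def rkgMeasure (n K P : ℕ) : Measure (Fin n → KeyRing P K) :=
  Measure.pi fun _ : Fin n => uniformKeyMeasure P K

/-- Degree of a vertex. -/
def gDeg {V : Type*} (G : SimpleGraph V) (v : V) : ℕ := Nat.card {w // G.Adj v w}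

/-- Minimum vertex degree. -/
def minDeg {V : Type*} (G : SimpleGraph V) : ℕ := sInf (Set.range (gDeg G))

/-- A graph is `k`-connected if it remains connected after the removal of any
`k - 1` of its vertices. -/
def KConnected {V : Type*} (G : SimpleGraph V) (k : ℕ) : Prop :=
  ∀ S : Finset V, S.card ≤ k - 1 → (G.induce ((S : Set V)ᶜ)).Connected

/-- Vertex connectivity: the least number of vertices whose deletion disconnects
the graph. -/
def vertexConn {V : Type*} (G : SimpleGraph V) : ℕ :=
  sInf {m | ∃ S : Finset V, S.card = m ∧ ¬ (G.induce ((S : Set V)ᶜ)).Connected}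

/-- `p_s`: the probability that two key rings share at least one key. -/
def psf (K P : ℕ) : ℝ :=
  if 2 * K ≤ P then 1 - (Nat.choose (P - K) K : ℝ) / (Nat.choose P K : ℝ) else 1

/-- `p_e = p · p_s`: the probability of an edge in `𝔾_on`. -/
def pef (K P : ℕ) (p : ℝ) : ℝ := p * psf K P

/-- The event `D_{x,ℓ}` that the node with index `x` has degree exactly `ℓ`. -/
def degEvent (n K P : ℕ) (x ℓ : ℕ) : Set (GonSpace n K P) :=
  {ω | ∃ hx : x < n, gDeg (gonGraph ω) ⟨x, hx⟩ = ℓ}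

/-- The event `E_{xy}` that the edge between the nodes with indices `x`, `y` is present. -/
def edgeEvent (n K P : ℕ) (x y : ℕ) : Set (GonSpace n K P) :=
  {ω | ∃ (hx : x < n) (hy : y < n), (gonGraph ω).Adj ⟨x, hx⟩ ⟨y, hy⟩}

/-- The event that the key rings of nodes `x` and `y` share exactly `u` keys. -/
def interCardEvent (n K P : ℕ) (x y u : ℕ) : Set (GonSpace n K P) :=
  {ω | ∃ (hx : x < n) (hy : y < n), ((ω.1 ⟨x, hx⟩).1 ∩ (ω.1 ⟨y, hy⟩).1).card = u}

/-- The event `K_{xy}` that the key rings of nodes `x` and `y` share at least one key. -/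
def keyShareEvent (n K P : ℕ) (x y : ℕ) : Set (GonSpace n K P) :=
  {ω | ∃ (hx : x < n) (hy : y < n), ((ω.1 ⟨x, hx⟩).1 ∩ (ω.1 ⟨y, hy⟩).1).Nonempty}

/-- `r_n = min(⌊P/K⌋, ⌊n/2⌋)`. -/
def rn (n K P : ℕ) : ℕ := min (P / K) (n / 2)

/-- The threshold array `J`. -/
def Jarr (n K P : ℕ) (ε lam mu : ℝ) (i : ℕ) : ℕ :=
  if i ≤ rn n K P then max ⌊(1 + ε) * (K : ℝ)⌋₊ ⌊lam * (K : ℝ) * (i : ℝ)⌋₊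
  else ⌊mu * (P : ℝ)⌋₊

/-- The event `𝓔(J)`: some set `T` of at least two nodes has a union of key rings of
size at most `J_{|T|}`. -/
def EJ (n K P : ℕ) (ε lam mu : ℝ) : Set (GonSpace n K P) :=
  {ω | ∃ T : Finset (Fin n), 2 ≤ T.card ∧
    (T.biUnion fun i => (ω.1 i).1).card ≤ Jarr n K P ε lam mu T.card}

/-!
A second-moment argument on the number of vertices of degree less than `k`. Its mean is `n` times
a partial binomial sum, which tends to infinity as `α → -∞`. For the pair correlations, condition
on the key rings of two roots: the other vertices then behave as independent trials. If the two
rings are disjoint, the joint probability is asymptotically at most that of two independent roots,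
because missing two disjoint sets of keys is at most as likely as missing them independently.
Rings sharing at least one, respectively two, keys have probability at most `s = K ^ 2 / P`,
respectively `s ^ 2`, and contribute at most of order `s * n ^ (2 * p / 3)`, respectively its
square. This tends to zero: either `p * log n ≤ 1`, or `p * s = O(log n / n)` forces
`s = O((log n) ^ 2 / n)`. Finally, a `k`-connected graph on more than `k` vertices has minimum
degree at least `k`.
-/

section ProductMeasures

open ProbabilityTheory

theorem measurePreserving_comp_injective {ι κ X : Type*} [Fintype ι] [Fintype κ]
    [MeasurableSpace X] (μ : Measure X) [IsProbabilityMeasure μ] {φ : ι → κ}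
    (hφ : Function.Injective φ) :
    MeasurePreserving (fun (C : κ → X) i => C (φ i)) (Measure.pi fun _ => μ)
      (Measure.pi fun _ => μ) := by
  refine ⟨by fun_prop, ?_⟩
  have hindep : iIndepFun (fun i (C : κ → X) => C (φ i)) (Measure.pi fun _ => μ) :=
    (iIndepFun_pi (X := fun _ => id) fun _ => aemeasurable_id).precomp hφ
  rw [iIndepFun_iff_map_fun_eq_pi_map fun i => (measurable_pi_apply _).aemeasurable] at hindep
  refine hindep.trans (congrArg Measure.pi (funext fun i => ?_))
  exact (measurePreserving_eval (fun _ => μ) (φ i)).map_eq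

theorem pi_setOf_comp_eq {ι κ X : Type*} [Fintype ι] [Fintype κ] [MeasurableSpace X]
    [MeasurableSingletonClass X] (μ : Measure X) [IsProbabilityMeasure μ] {φ : ι → κ}
    (hφ : Function.Injective φ) (d : ι → X) :
    (Measure.pi fun _ : κ => μ) {C | ∀ i, C (φ i) = d i} = ∏ i, μ {d i} := by
  rw [← Measure.pi_singleton, ← (measurePreserving_comp_injective μ hφ).measure_preimage
    (measurableSet_singleton d).nullMeasurableSet]
  congr 1
  ext C
  simp [funext_iff]

theorem measureReal_prod_eq_integral {X Y : Type*} [MeasurableSpace X] [MeasurableSpace Y]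
    (μ : Measure X) (ν : Measure Y) [IsFiniteMeasure ν] {s : Set (X × Y)}
    (hs : MeasurableSet s) :
    (μ.prod ν).real s = ∫ x, ν.real (Prod.mk x ⁻¹' s) ∂μ := by
  simp only [measureReal_def]
  rw [Measure.prod_apply hs, integral_toReal (measurable_measure_prodMk_left hs).aemeasurable
    (ae_of_all _ fun x => measure_lt_top _ _)]

theorem pi_finTwo_real_eq_integral {X : Type*} [MeasurableSpace X] (μ : Measure X)
    [IsProbabilityMeasure μ] {s : Set (Fin 2 → X)} (hs : MeasurableSet s) :
    (Measure.pi fun _ : Fin 2 => μ).real s = ∫ x, μ.real {y | ![x, y] ∈ s} ∂μ := by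
  have hpres := measurePreserving_finTwoArrow μ
  rw [← MeasurePreserving.measureReal_preimage hpres.symm hs.nullMeasurableSet,
    measureReal_prod_eq_integral μ μ (MeasurableEquiv.measurable _ hs)]
  rfl

theorem integral_le_add_mul_add_mul {X : Type*} [MeasurableSpace X] {μ : Measure X}
    [IsProbabilityMeasure μ] {f : X → ℝ} (hf : Integrable f μ) {E F : Set X}
    (hE : MeasurableSet E) (hF : MeasurableSet F) {a b c : ℝ}
    (h : ∀ x, f x ≤ a + E.indicator 1 x * b + F.indicator 1 x * c) :
    ∫ x, f x ∂μ ≤ a + μ.real E * b + μ.real F * c := by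
  have hEb : Integrable (fun x => E.indicator 1 x * b) μ :=
    ((integrable_const (1 : ℝ)).indicator hE).mul_const b
  have hFc : Integrable (fun x => F.indicator 1 x * c) μ :=
    ((integrable_const (1 : ℝ)).indicator hF).mul_const c
  have haE : Integrable (fun x => a + E.indicator 1 x * b) μ := (integrable_const a).add hEb
  refine (integral_mono hf (haE.add hFc) h).trans_eq ?_
  rw [integral_add' haE hFc, integral_add (integrable_const a) hEb,
    integral_mul_const, integral_mul_const, integral_indicator_one hE, integral_indicator_one hF,
    integral_const, probReal_univ, one_smul]

end ProductMeasures

section SecondMoment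

open ProbabilityTheory

variable {Ω ι : Type*} [MeasurableSpace Ω] {μ : Measure Ω} [IsProbabilityMeasure μ]

theorem memLp_indicator_one {E : Set Ω} (hE : MeasurableSet E) (r : ℝ≥0∞) :
    MemLp (E.indicator (1 : Ω → ℝ)) r μ :=
  (memLp_const 1).indicator hE

theorem covariance_indicator_one {E F : Set Ω} (hE : MeasurableSet E) (hF : MeasurableSet F) :
    cov[E.indicator 1, F.indicator 1; μ] = μ.real (E ∩ F) - μ.real E * μ.real F := by
  rw [covariance_eq_sub (memLp_indicator_one hE 2) (memLp_indicator_one hF 2),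
    integral_indicator_one hE, integral_indicator_one hF, ← Set.inter_indicator_one,
    integral_indicator_one (hE.inter hF)]

theorem variance_sum_indicator_le [Fintype ι] {E : ι → Set Ω} (hE : ∀ i, MeasurableSet (E i))
    {m c : ℝ} (hc : 0 ≤ c) (hm : ∀ i, μ.real (E i) = m)
    (hpair : Pairwise fun i j => μ.real (E i ∩ E j) ≤ c * m ^ 2) :
    Var[fun ω => ∑ i, (E i).indicator (1 : Ω → ℝ) ω; μ] ≤
      Fintype.card ι * m + (Fintype.card ι) ^ 2 * ((c - 1) * m ^ 2) := by
  classical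
  have hcov (i j : ι) : cov[(E i).indicator (1 : Ω → ℝ), (E j).indicator 1; μ] ≤
      (if i = j then m else 0) + (c - 1) * m ^ 2 := by
    rw [covariance_indicator_one (hE i) (hE j), hm, hm]
    split_ifs with h
    · rw [h, Set.inter_self, hm]
      nlinarith [mul_nonneg hc (sq_nonneg m)]
    · linarith [hpair h]
  rw [variance_fun_sum fun i => memLp_indicator_one (hE i) 2]
  calc ∑ i, ∑ j, cov[(E i).indicator (1 : Ω → ℝ), (E j).indicator 1; μ]
      ≤ ∑ i : ι, ∑ j : ι, ((if i = j then m else 0) + (c - 1) * m ^ 2) :=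
        Finset.sum_le_sum fun i _ => Finset.sum_le_sum fun j _ => hcov i j
    _ = _ := by
        simp only [Finset.sum_add_distrib, Finset.sum_ite_eq, Finset.mem_univ, if_true,
          Finset.sum_const, Finset.card_univ, nsmul_eq_mul]
        ring

theorem measureReal_forall_notMem_le [Fintype ι] {E : ι → Set Ω} (hE : ∀ i, MeasurableSet (E i))
    {m c : ℝ} (hι : 0 < Fintype.card ι) (hm0 : 0 < m) (hc : 0 ≤ c) (hm : ∀ i, μ.real (E i) = m)
    (hpair : Pairwise fun i j => μ.real (E i ∩ E j) ≤ c * m ^ 2) :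
    μ.real {ω | ∀ i, ω ∉ E i} ≤ 1 / (Fintype.card ι * m) + (c - 1) := by
  have : (0 : ℝ) < Fintype.card ι := by exact_mod_cast hι
  let X : Ω → ℝ := fun ω => ∑ i, (E i).indicator 1 ω
  have hX : MemLp X 2 μ := memLp_finsetSum _ fun i _ => memLp_indicator_one (hE i) 2
  have hmean : ∫ ω, X ω ∂μ = Fintype.card ι * m := by
    rw [integral_finsetSum _ fun i _ => (memLp_indicator_one (hE i) 1).integrable le_rfl]
    simp only [integral_indicator_one (hE _), hm, Finset.sum_const, Finset.card_univ, nsmul_eq_mul]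
  have hsub : {ω | ∀ i, ω ∉ E i} ⊆ {ω | Fintype.card ι * m ≤ |X ω - ∫ ω, X ω ∂μ|} := by
    intro ω (hω : ∀ i, ω ∉ E i)
    have hX0 : X ω = 0 := Finset.sum_eq_zero fun i _ => Set.indicator_of_notMem (hω i) _
    simp [hX0, hmean, abs_of_pos hm0]
  have hvar := variance_sum_indicator_le hE hc hm hpair
  calc μ.real {ω | ∀ i, ω ∉ E i}
      ≤ μ.real {ω | Fintype.card ι * m ≤ |X ω - ∫ ω, X ω ∂μ|} := measureReal_mono hsub
    _ ≤ Var[X; μ] / (Fintype.card ι * m) ^ 2 :=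
        ENNReal.toReal_le_of_le_ofReal (by have := variance_nonneg X μ; positivity)
          (meas_ge_le_variance_div_sq hX (by positivity))
    _ ≤ (Fintype.card ι * m + (Fintype.card ι) ^ 2 * ((c - 1) * m ^ 2)) /
          (Fintype.card ι * m) ^ 2 := by gcongr
    _ = 1 / (Fintype.card ι * m) + (c - 1) := by field_simp

end SecondMoment

section BinomialSum

/-- The sum of the first `k` terms of the binomial expansion of `(a + b) ^ N` in powers of `b`.
With `a = 1 - q` and `b = q` it is the probability of fewer than `k` successes in `N` independent
trials of success probability `q`. -/
def partialBinomialSum (a b : ℝ) (N k : ℕ) : ℝ :=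
  ∑ j ∈ Finset.range k, (N.choose j : ℝ) * (b ^ j * a ^ (N - j))

theorem partialBinomialSum_nonneg {a b : ℝ} (ha : 0 ≤ a) (hb : 0 ≤ b) (N k : ℕ) :
    0 ≤ partialBinomialSum a b N k :=
  Finset.sum_nonneg fun _ _ => by positivity

theorem partialBinomialSum_mul_le {a b c : ℝ} (ha : 0 ≤ a) (hb : 0 ≤ b) (hc : 1 ≤ c) (N k : ℕ) :
    partialBinomialSum a (c * b) N k ≤ c ^ k * partialBinomialSum a b N k := by
  rw [partialBinomialSum, partialBinomialSum, Finset.mul_sum]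
  refine Finset.sum_le_sum fun j hj => ?_
  calc (N.choose j : ℝ) * ((c * b) ^ j * a ^ (N - j))
      = c ^ j * (N.choose j * (b ^ j * a ^ (N - j))) := by rw [mul_pow]; ring
    _ ≤ c ^ k * (N.choose j * (b ^ j * a ^ (N - j))) := by
        gcongr
        exact (Finset.mem_range.1 hj).le

theorem sum_pow_card_filter_card_lt {Z : Type*} [Fintype Z] (a b : ℝ) (k : ℕ) :
    ∑ I : Finset Z with I.card < k, b ^ I.card * a ^ (Fintype.card Z - I.card) =
      partialBinomialSum a b (Fintype.card Z) k := by
  rw [Finset.sum_filter, ← Finset.powerset_univ, Finset.sum_powerset_apply_card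
    fun j => if j < k then b ^ j * a ^ (Fintype.card Z - j) else 0, partialBinomialSum]
  simp only [Finset.card_univ, nsmul_eq_mul, mul_ite, mul_zero]
  rw [← Finset.sum_filter]
  refine Finset.sum_subset_zero_on_sdiff (fun j hj => by simp_all) (fun j hj => ?_)
    fun _ _ => rfl
  simp only [Finset.mem_sdiff, Finset.mem_range, Finset.mem_filter, not_and, not_lt] at hj
  rw [Nat.choose_eq_zero_of_lt (by by_contra! h; have := hj.2 (by omega); omega)]
  simp

theorem mul_partialBinomialSum_le_succ {q : ℝ} (h0 : 0 ≤ q) (h1 : q ≤ 1) (N k : ℕ) :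
    (1 - q) * partialBinomialSum (1 - q) q N k ≤ partialBinomialSum (1 - q) q (N + 1) k := by
  have : 0 ≤ 1 - q := by linarith
  rw [partialBinomialSum, partialBinomialSum, Finset.mul_sum]
  refine Finset.sum_le_sum fun j _ => ?_
  rcases Nat.lt_or_ge N j with h | h
  · rw [Nat.choose_eq_zero_of_lt h]
    simp only [Nat.cast_zero, zero_mul, mul_zero]
    positivity
  · calc (1 - q) * ((N.choose j : ℝ) * (q ^ j * (1 - q) ^ (N - j)))
        = N.choose j * (q ^ j * (1 - q) ^ (N + 1 - j)) := by
          rw [Nat.succ_sub h, pow_succ]; ring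
      _ ≤ (N + 1).choose j * (q ^ j * (1 - q) ^ (N + 1 - j)) := by
          gcongr
          omega

theorem choose_mul_le_mul_choose {r M j : ℕ} (hjr : j ≤ r) (hrM : 2 * r ≤ M + 1) :
    r.choose j * (M + 1) ^ j ≤ 2 ^ r * r.factorial * M.choose j := by
  have hdesc : r.choose j * j.factorial ≤ r.factorial := by
    rw [mul_comm, ← Nat.descFactorial_eq_factorial_mul_choose,
      ← Nat.factorial_mul_descFactorial hjr]
    exact Nat.le_mul_of_pos_left _ (Nat.factorial_pos _)
  have hhalf : M + 1 ≤ 2 * (M + 1 - j) := by omega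
  have hpow : (M + 1) ^ j ≤ 2 ^ r * (j.factorial * M.choose j) := by
    calc (M + 1) ^ j ≤ (2 * (M + 1 - j)) ^ j := Nat.pow_le_pow_left hhalf j
      _ = 2 ^ j * (M + 1 - j) ^ j := mul_pow _ _ _
      _ ≤ 2 ^ r * M.descFactorial j :=
          Nat.mul_le_mul (Nat.pow_le_pow_right two_pos hjr) (Nat.pow_sub_le_descFactorial M j)
      _ = _ := by rw [Nat.descFactorial_eq_factorial_mul_choose]
  calc r.choose j * (M + 1) ^ j ≤ r.choose j * (2 ^ r * (j.factorial * M.choose j)) := by gcongr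
    _ = 2 ^ r * (r.choose j * j.factorial) * M.choose j := by ring
    _ ≤ 2 ^ r * r.factorial * M.choose j := by gcongr

theorem le_partialBinomialSum {q : ℝ} (h0 : 0 ≤ q) (h1 : q ≤ 1) {r M : ℕ} (hM : 2 * r ≤ M + 1) :
    (1 + (M + 1) * q) ^ r * (1 - q) ^ M ≤
      2 ^ r * r.factorial * partialBinomialSum (1 - q) q M (r + 1) := by
  have hq : 0 ≤ 1 - q := by linarith
  rw [add_comm, add_pow, partialBinomialSum, Finset.sum_mul, Finset.mul_sum]
  refine Finset.sum_le_sum fun j hj => ?_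
  have hcoeff : (r.choose j : ℝ) * (M + 1) ^ j ≤ 2 ^ r * r.factorial * M.choose j := by
    exact_mod_cast choose_mul_le_mul_choose (Finset.mem_range_succ_iff.1 hj) hM
  calc ((M + 1) * q) ^ j * 1 ^ (r - j) * r.choose j * (1 - q) ^ M
      = r.choose j * (M + 1) ^ j * (q ^ j * (1 - q) ^ M) := by rw [mul_pow, one_pow]; ring
    _ ≤ 2 ^ r * r.factorial * M.choose j * (q ^ j * (1 - q) ^ (M - j)) :=
        mul_le_mul hcoeff (mul_le_mul_of_nonneg_left
          (pow_le_pow_of_le_one hq (by linarith) (Nat.sub_le M j)) (by positivity))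
          (by positivity) (by positivity)
    _ = _ := by ring

theorem partialBinomialSum_le {b : ℝ} (h0 : 0 ≤ b) (h1 : b ≤ 1 / 2) (N s : ℕ) :
    partialBinomialSum (1 - b) b N (s + 1) ≤ 2 ^ s * (1 + N * b) ^ s * (1 - b) ^ N := by
  have hb : 0 < 1 - b := by linarith
  have hpow {j : ℕ} (hjs : j ≤ s) (hjN : j ≤ N) : (1 - b) ^ (N - j) ≤ 2 ^ s * (1 - b) ^ N := by
    have htwo : (1 : ℝ) ≤ 2 ^ j * (1 - b) ^ j := by
      rw [← mul_pow]
      exact one_le_pow₀ (by linarith)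
    calc (1 - b) ^ (N - j) ≤ (1 - b) ^ (N - j) * (2 ^ j * (1 - b) ^ j) :=
          le_mul_of_one_le_right (by positivity) htwo
      _ = 2 ^ j * (1 - b) ^ N := by
          rw [← pow_sub_mul_pow (1 - b) hjN]; ring
      _ ≤ 2 ^ s * (1 - b) ^ N := by
          gcongr
          exact one_le_two
  rw [mul_right_comm, add_comm 1, add_pow, partialBinomialSum, Finset.mul_sum]
  refine Finset.sum_le_sum fun j hj => ?_
  have hjs := Finset.mem_range_succ_iff.1 hj
  rcases Nat.lt_or_ge N j with hjN | hjN
  · rw [Nat.choose_eq_zero_of_lt hjN]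
    simp only [Nat.cast_zero, zero_mul]
    positivity
  have hcoeff : (N.choose j : ℝ) ≤ N ^ j * s.choose j :=
    (by exact_mod_cast Nat.choose_le_pow N j : (N.choose j : ℝ) ≤ N ^ j).trans
      (le_mul_of_one_le_right (by positivity) (by exact_mod_cast Nat.choose_pos hjs))
  calc (N.choose j : ℝ) * (b ^ j * (1 - b) ^ (N - j))
      ≤ N ^ j * s.choose j * (b ^ j * (2 ^ s * (1 - b) ^ N)) :=
        mul_le_mul hcoeff (mul_le_mul_of_nonneg_left (hpow hjs hjN) (by positivity))
          (by positivity) (by positivity)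
    _ = _ := by rw [mul_pow, one_pow]; ring

theorem one_sub_two_mul_sub_le {q a : ℝ} (ha : 0 ≤ a) (haq : a ≤ q) (hq : q ≤ 1 / 40) :
    1 - (2 * q - a) ≤ (1 - q) ^ 2 * Real.exp (11 / 10 * a) := by
  have hexp : 1 + 11 / 10 * a ≤ Real.exp (11 / 10 * a) := by
    linarith [Real.add_one_le_exp (11 / 10 * a)]
  have hsq : 0 ≤ 11 / 10 * (1 - q) ^ 2 - 1 := by nlinarith
  calc 1 - (2 * q - a) ≤ (1 - q) ^ 2 * (1 + 11 / 10 * a) := by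
        nlinarith [mul_nonneg ha hsq, sq_nonneg q]
    _ ≤ (1 - q) ^ 2 * Real.exp (11 / 10 * a) := by gcongr

theorem partialBinomialSum_two_mul_sub_le {q a : ℝ} (ha : 0 ≤ a) (haq : a ≤ q) (hq : q ≤ 1 / 40)
    {N r : ℕ} (hN : 2 * r ≤ N + 1) :
    partialBinomialSum (1 - (2 * q - a)) (2 * q - a) N (2 * r + 1) ≤
      64 ^ r * r.factorial ^ 2 * partialBinomialSum (1 - q) q N (r + 1) ^ 2 *
        Real.exp (11 / 10 * (N * a)) := by
  have hq0 : 0 ≤ q := ha.trans haq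
  have hlower := le_partialBinomialSum hq0 (by linarith) hN
  have hmean : 1 + N * (2 * q - a) ≤ 2 * (1 + (N + 1) * q) := by
    nlinarith [mul_nonneg (Nat.cast_nonneg (α := ℝ) N) ha]
  have hbase : (1 - (2 * q - a)) ^ N ≤ ((1 - q) ^ N) ^ 2 * Real.exp (11 / 10 * (N * a)) := by
    calc (1 - (2 * q - a)) ^ N ≤ ((1 - q) ^ 2 * Real.exp (11 / 10 * a)) ^ N :=
          pow_le_pow_left₀ (by linarith) (one_sub_two_mul_sub_le ha haq hq) N
      _ = ((1 - q) ^ N) ^ 2 * Real.exp (11 / 10 * (N * a)) := by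
          rw [mul_pow, ← Real.exp_nat_mul, pow_right_comm, mul_left_comm]
  calc partialBinomialSum (1 - (2 * q - a)) (2 * q - a) N (2 * r + 1)
      ≤ 2 ^ (2 * r) * (1 + N * (2 * q - a)) ^ (2 * r) * (1 - (2 * q - a)) ^ N :=
        partialBinomialSum_le (by linarith) (by linarith) N (2 * r)
    _ ≤ 2 ^ (2 * r) * (2 * (1 + (N + 1) * q)) ^ (2 * r) *
          (((1 - q) ^ N) ^ 2 * Real.exp (11 / 10 * (N * a))) := by
        have : 0 ≤ 1 + N * (2 * q - a) := by
          have : 0 ≤ 2 * q - a := by linarith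
          positivity
        have : 0 ≤ 1 - (2 * q - a) := by linarith
        gcongr
    _ = 16 ^ r * ((1 + (N + 1) * q) ^ r * (1 - q) ^ N) ^ 2 * Real.exp (11 / 10 * (N * a)) := by
        rw [mul_pow 2, pow_mul 2, pow_mul' (1 + (N + 1) * q), mul_pow,
          show (16 : ℝ) ^ r = (2 ^ 2) ^ r * (2 ^ 2) ^ r by rw [← mul_pow]; norm_num]
        ring
    _ ≤ 16 ^ r * (2 ^ r * r.factorial * partialBinomialSum (1 - q) q N (r + 1)) ^ 2 *
          Real.exp (11 / 10 * (N * a)) := by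
        have : 0 ≤ 1 - q := by linarith
        gcongr
    _ = _ := by
        rw [mul_pow, mul_pow, ← pow_mul, mul_comm r 2, pow_mul, ← mul_assoc, ← mul_assoc, ← mul_pow]
        norm_num

theorem exp_neg_add_le_one_sub_pow {q : ℝ} (h1 : q ≤ 1 / 2) (n : ℕ) :
    Real.exp (-(n * q + 2 * (n * q ^ 2))) ≤ (1 - q) ^ n := by
  have hbase : Real.exp (-(q + 2 * q ^ 2)) ≤ 1 - q := by
    rw [Real.exp_neg]
    refine inv_le_of_inv_le₀ (by linarith) ?_
    have := Real.add_one_le_exp (q + 2 * q ^ 2)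
    refine le_trans ?_ this
    rw [inv_le_iff_one_le_mul₀ (by linarith)]
    nlinarith [mul_nonneg (sq_nonneg q) (by linarith : 0 ≤ 1 - 2 * q)]
  calc Real.exp (-(n * q + 2 * (n * q ^ 2))) = Real.exp (-(q + 2 * q ^ 2)) ^ n := by
        rw [← Real.exp_nat_mul]; ring_nf
    _ ≤ (1 - q) ^ n := by gcongr

end BinomialSum

section IndependentTrials

theorem prod_ite_mem_const {Z : Type*} [Fintype Z] [DecidableEq Z] (I : Finset Z) (a b : ℝ) :
    ∏ z, (if z ∈ I then b else a) = b ^ I.card * a ^ (Fintype.card Z - I.card) := by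
  rw [Finset.prod_ite, Finset.prod_const, Finset.prod_const, ← Finset.card_compl]
  congr <;> ext <;> simp

variable {Z T : Type*} [Fintype Z]

open Classical in
/-- The trials `z` whose outcome `t z` lies in `Q`. -/
def hits (Q : Set T) (t : Z → T) : Finset Z := {z | t z ∈ Q}

theorem mem_hits {Q : Set T} {t : Z → T} {z : Z} : z ∈ hits Q t ↔ t z ∈ Q := by
  simp [hits]

theorem card_hits (Q : Set T) (t : Z → T) : (hits Q t).card = Nat.card {z // t z ∈ Q} := by
  classical
  rw [Nat.card_eq_fintype_card, Fintype.card_subtype, hits]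

theorem card_hits_union_le (Q₁ Q₂ : Set T) (t : Z → T) :
    (hits (Q₁ ∪ Q₂) t).card ≤ (hits Q₁ t).card + (hits Q₂ t).card := by
  classical
  refine (Finset.card_le_card fun z hz => ?_).trans (Finset.card_union_le _ _)
  simpa only [Finset.mem_union, mem_hits, Set.mem_union] using hz

open Classical in
theorem hits_preimage_singleton (Q : Set T) (I : Finset Z) :
    hits Q ⁻¹' {I} = Set.univ.pi fun z => if z ∈ I then Q else Qᶜ := by
  ext t
  simp only [Set.mem_preimage, Set.mem_singleton_iff, Finset.ext_iff, mem_hits, Set.mem_univ_pi]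
  refine forall_congr' fun z => ?_
  by_cases hz : z ∈ I <;> simp [hz]

variable [MeasurableSpace T] {ν : Measure T} [IsProbabilityMeasure ν]

theorem measurableSet_hits_preimage {Q : Set T} (hQ : MeasurableSet Q) (S : Set (Finset Z)) :
    MeasurableSet (hits Q ⁻¹' S) := by
  classical
  rw [← Set.biUnion_preimage_singleton]
  refine .biUnion S.to_countable fun I _ => ?_
  rw [hits_preimage_singleton]
  refine .univ_pi fun z => ?_
  split_ifs
  exacts [hQ, hQ.compl]

theorem pi_real_hits_eq {Q : Set T} (hQ : MeasurableSet Q) (I : Finset Z) :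
    (Measure.pi fun _ : Z => ν).real (hits Q ⁻¹' {I}) =
      ν.real Q ^ I.card * (1 - ν.real Q) ^ (Fintype.card Z - I.card) := by
  classical
  rw [hits_preimage_singleton, measureReal_def, Measure.pi_pi, ENNReal.toReal_prod,
    ← prod_ite_mem_const]
  refine Finset.prod_congr rfl fun z _ => ?_
  split_ifs
  exacts [rfl, probReal_compl_eq_one_sub hQ]

theorem pi_real_card_hits_lt {Q : Set T} (hQ : MeasurableSet Q) (k : ℕ) :
    (Measure.pi fun _ : Z => ν).real {t | (hits Q t).card < k} =
      partialBinomialSum (1 - ν.real Q) (ν.real Q) (Fintype.card Z) k := by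
  classical
  have hsum := sum_measureReal_preimage_singleton (μ := Measure.pi fun _ : Z => ν)
    (f := hits Q) {I : Finset Z | I.card < k} fun I _ => measurableSet_hits_preimage hQ {I}
  simp only [pi_real_hits_eq hQ, sum_pow_card_filter_card_lt] at hsum
  rw [hsum]
  congr 1
  ext t
  simp

theorem measureReal_cell_le {Q₁ Q₂ : Set T} (hQ₁ : MeasurableSet Q₁) (hQ₂ : MeasurableSet Q₂)
    (h₁ : ν.real Q₁ < 1) (h₂ : ν.real Q₂ < 1) (h₁₂ : ν.real (Q₁ ∩ Q₂) ≤ ν.real Q₁ * ν.real Q₂)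
    (b₁ b₂ : Prop) [Decidable b₁] [Decidable b₂] :
    ν.real ((if b₁ then Q₁ else Q₁ᶜ) ∩ if b₂ then Q₂ else Q₂ᶜ) ≤
      (if b₁ then (1 - ν.real Q₂)⁻¹ * ν.real Q₁ else 1 - ν.real Q₁) *
        if b₂ then (1 - ν.real Q₁)⁻¹ * ν.real Q₂ else 1 - ν.real Q₂ := by
  have hq₁ : 0 < 1 - ν.real Q₁ := by linarith
  have hq₂ : 0 < 1 - ν.real Q₂ := by linarith
  have hinv {Q : Set T} (hQ : 0 < 1 - ν.real Q) : 1 ≤ (1 - ν.real Q)⁻¹ :=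
    (one_le_inv₀ hQ).2 (by linarith [measureReal_nonneg (μ := ν) (s := Q)])
  by_cases hb₁ : b₁ <;> by_cases hb₂ : b₂ <;> simp only [hb₁, hb₂, if_true, if_false]
  · exact h₁₂.trans (mul_le_mul (le_mul_of_one_le_left measureReal_nonneg (hinv hq₂))
      (le_mul_of_one_le_left measureReal_nonneg (hinv hq₁)) measureReal_nonneg (by positivity))
  · rw [mul_right_comm, inv_mul_cancel₀ hq₂.ne', one_mul]
    exact measureReal_mono Set.inter_subset_left
  · rw [mul_left_comm, inv_mul_cancel_left₀ hq₁.ne']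
    exact measureReal_mono Set.inter_subset_right
  · have hunion := measureReal_union_add_inter (μ := ν) (s := Q₁) hQ₂
    rw [← Set.compl_union, probReal_compl_eq_one_sub (hQ₁.union hQ₂)]
    nlinarith

theorem pi_real_hits_eq_and_hits_eq_le {Q₁ Q₂ : Set T} (hQ₁ : MeasurableSet Q₁)
    (hQ₂ : MeasurableSet Q₂) (h₁ : ν.real Q₁ < 1) (h₂ : ν.real Q₂ < 1)
    (h₁₂ : ν.real (Q₁ ∩ Q₂) ≤ ν.real Q₁ * ν.real Q₂) (I J : Finset Z) :
    (Measure.pi fun _ : Z => ν).real (hits Q₁ ⁻¹' {I} ∩ hits Q₂ ⁻¹' {J}) ≤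
      ((1 - ν.real Q₂)⁻¹ * ν.real Q₁) ^ I.card *
          (1 - ν.real Q₁) ^ (Fintype.card Z - I.card) *
        (((1 - ν.real Q₁)⁻¹ * ν.real Q₂) ^ J.card *
          (1 - ν.real Q₂) ^ (Fintype.card Z - J.card)) := by
  classical
  rw [hits_preimage_singleton, hits_preimage_singleton, ← Set.pi_inter_distrib, measureReal_def,
    Measure.pi_pi, ENNReal.toReal_prod, ← prod_ite_mem_const, ← prod_ite_mem_const,
    ← Finset.prod_mul_distrib]
  simp only [← measureReal_def]
  exact Finset.prod_le_prod (fun _ _ => measureReal_nonneg) fun z _ =>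
    measureReal_cell_le hQ₁ hQ₂ h₁ h₂ h₁₂ (z ∈ I) (z ∈ J)

theorem pi_real_card_hits_lt_and_card_hits_lt_le {Q₁ Q₂ : Set T} (hQ₁ : MeasurableSet Q₁)
    (hQ₂ : MeasurableSet Q₂) (h₁ : ν.real Q₁ < 1) (h₂ : ν.real Q₂ < 1)
    (h₁₂ : ν.real (Q₁ ∩ Q₂) ≤ ν.real Q₁ * ν.real Q₂) (k : ℕ) :
    (Measure.pi fun _ : Z => ν).real {t | (hits Q₁ t).card < k ∧ (hits Q₂ t).card < k} ≤
      (1 - ν.real Q₂)⁻¹ ^ k *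
          partialBinomialSum (1 - ν.real Q₁) (ν.real Q₁) (Fintype.card Z) k *
        ((1 - ν.real Q₁)⁻¹ ^ k *
          partialBinomialSum (1 - ν.real Q₂) (ν.real Q₂) (Fintype.card Z) k) := by
  classical
  have hB {Q R : Set T} (hQ : ν.real Q < 1) (hR : ν.real R < 1) :=
    partialBinomialSum_mul_le (sub_nonneg.2 hQ.le) (measureReal_nonneg (μ := ν) (s := Q))
      ((one_le_inv₀ (sub_pos.2 hR)).2 (sub_le_self 1 measureReal_nonneg)) (Fintype.card Z) k
  have hpos {Q R : Set T} (hQ : ν.real Q < 1) (hR : ν.real R < 1) :=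
    partialBinomialSum_nonneg (sub_nonneg.2 hQ.le)
      (mul_nonneg (inv_nonneg.2 (sub_nonneg.2 hR.le)) (measureReal_nonneg (μ := ν) (s := Q)))
      (Fintype.card Z) k
  let S : Finset (Finset Z) := {I | I.card < k}
  have hcells : {t : Z → T | (hits Q₁ t).card < k ∧ (hits Q₂ t).card < k} ⊆
      ⋃ x ∈ S ×ˢ S, hits Q₁ ⁻¹' {x.1} ∩ hits Q₂ ⁻¹' {x.2} := fun t ht =>
    Set.mem_biUnion (x := (hits Q₁ t, hits Q₂ t)) (by simpa [S] using ht) ⟨rfl, rfl⟩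
  calc (Measure.pi fun _ : Z => ν).real {t | (hits Q₁ t).card < k ∧ (hits Q₂ t).card < k}
      ≤ ∑ x ∈ S ×ˢ S, (Measure.pi fun _ : Z => ν).real (hits Q₁ ⁻¹' {x.1} ∩ hits Q₂ ⁻¹' {x.2}) :=
        (measureReal_mono hcells (measure_ne_top _ _)).trans (measureReal_biUnion_finset_le _ _)
    _ ≤ _ := Finset.sum_le_sum fun x _ =>
        pi_real_hits_eq_and_hits_eq_le hQ₁ hQ₂ h₁ h₂ h₁₂ x.1 x.2
    _ = _ := by
        rw [← sum_pow_card_filter_card_lt, ← sum_pow_card_filter_card_lt, Finset.sum_mul_sum,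
          ← Finset.sum_product']
    _ ≤ _ := mul_le_mul (hB h₁ h₂) (hB h₂ h₁) (hpos h₂ h₁) ((hpos h₁ h₂).trans (hB h₁ h₂))

theorem pi_real_card_hits_lt_and_card_hits_lt_le_union {Q₁ Q₂ : Set T} (hQ₁ : MeasurableSet Q₁)
    (hQ₂ : MeasurableSet Q₂) (r : ℕ) :
    (Measure.pi fun _ : Z => ν).real
        {t | (hits Q₁ t).card < r + 1 ∧ (hits Q₂ t).card < r + 1} ≤
      partialBinomialSum (1 - ν.real (Q₁ ∪ Q₂)) (ν.real (Q₁ ∪ Q₂)) (Fintype.card Z)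
        (2 * r + 1) := by
  rw [← pi_real_card_hits_lt (hQ₁.union hQ₂)]
  refine measureReal_mono fun t ⟨h₁, h₂⟩ => ?_
  have := card_hits_union_le Q₁ Q₂ t
  change (hits (Q₁ ∪ Q₂) t).card < 2 * r + 1
  omega

end IndependentTrials

section UniformKeyRing

/-- The probability `(P - a choose K) / (P choose K)` that a uniform `K`-element subset of a
`P`-element set misses a given `a`-element subset. -/
def missProb (P K a : ℕ) : ℝ := ((P - a).choose K : ℝ) / (P.choose K : ℝ)

theorem missProb_le_one (P K a : ℕ) : missProb P K a ≤ 1 :=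
  div_le_one_of_le₀ (by exact_mod_cast Nat.choose_le_choose K (Nat.sub_le P a)) (by positivity)

theorem descFactorial_sub_mul_descFactorial_le (P a b K : ℕ) :
    (P - (a + b)).descFactorial K * P.descFactorial K ≤
      (P - a).descFactorial K * (P - b).descFactorial K := by
  simp only [Nat.descFactorial_eq_prod_range, ← Finset.prod_mul_distrib]
  refine Finset.prod_le_prod' fun i _ => ?_
  rcases Nat.lt_or_ge P (a + b + i) with h | h
  · simp [show P - (a + b) - i = 0 by omega]
  · obtain ⟨c, rfl⟩ := Nat.exists_eq_add_of_le h
    rw [show a + b + i + c - (a + b) - i = c by omega,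
      show a + b + i + c - i = a + b + c by omega,
      show a + b + i + c - a - i = b + c by omega,
      show a + b + i + c - b - i = a + c by omega]
    nlinarith [Nat.zero_le (a * b)]

theorem choose_sub_mul_choose_le (P a b K : ℕ) :
    (P - (a + b)).choose K * P.choose K ≤ (P - a).choose K * (P - b).choose K := by
  have h := descFactorial_sub_mul_descFactorial_le P a b K
  simp only [Nat.descFactorial_eq_factorial_mul_choose] at h
  rw [mul_mul_mul_comm _ ((P - (a + b)).choose K), mul_mul_mul_comm _ ((P - a).choose K)] at h
  exact Nat.le_of_mul_le_mul_left h (Nat.mul_pos K.factorial_pos K.factorial_pos)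

variable {P K : ℕ} (hK : K ≤ P)

include hK

theorem missProb_add_le (a b : ℕ) :
    missProb P K (a + b) ≤ missProb P K a * missProb P K b := by
  have hpos : (0 : ℝ) < P.choose K := by exact_mod_cast Nat.choose_pos hK
  have h : ((P - (a + b)).choose K : ℝ) * P.choose K ≤ (P - a).choose K * (P - b).choose K := by
    exact_mod_cast choose_sub_mul_choose_le P a b K
  rw [missProb, missProb, missProb, div_mul_div_comm, ← mul_div_mul_right _ _ hpos.ne']
  gcongr

theorem missProb_one : missProb P K 1 = 1 - (K : ℝ) / P := by
  rcases P with - | N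
  · simp [missProb, Nat.le_zero.1 hK]
  have hpos : (0 : ℝ) < (N + 1).choose K := by exact_mod_cast Nat.choose_pos hK
  have h : (N.choose K : ℝ) * (N + 1) = (N + 1).choose K * ((N + 1 : ℝ) - K) := by
    exact_mod_cast Nat.choose_mul_succ_eq N K
  rw [missProb, Nat.add_sub_cancel, Nat.cast_add_one, one_sub_div (by positivity),
    div_eq_div_iff hpos.ne' (by positivity), h, mul_comm]

theorem missProb_le_pow (a : ℕ) : missProb P K a ≤ (1 - (K : ℝ) / P) ^ a := by
  rw [← missProb_one hK]
  induction a with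
  | zero => simpa using missProb_le_one P K 0
  | succ a ih =>
    calc missProb P K (a + 1) ≤ missProb P K a * missProb P K 1 := missProb_add_le hK a 1
      _ ≤ missProb P K 1 ^ (a + 1) := by
          rw [pow_succ]
          exact mul_le_mul_of_nonneg_right ih (by unfold missProb; positivity)

omit hK in
theorem psf_eq_one_sub_missProb : psf K P = 1 - missProb P K K := by
  unfold psf missProb
  split_ifs with h
  · rfl
  · rw [Nat.choose_eq_zero_of_lt (by omega : P - K < K)]
    simp

omit hK in
theorem psf_nonneg : 0 ≤ psf K P := by
  rw [psf_eq_one_sub_missProb]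
  exact sub_nonneg.2 (missProb_le_one P K K)

theorem sq_div_le_one_add_mul_psf : (K : ℝ) ^ 2 / P ≤ (1 + (K : ℝ) ^ 2 / P) * psf K P := by
  set s : ℝ := (K : ℝ) ^ 2 / P with hs
  have : 0 ≤ s := by positivity
  have hbase : 0 ≤ 1 - (K : ℝ) / P :=
    sub_nonneg.2 (div_le_one_of_le₀ (by exact_mod_cast hK) (by positivity))
  have hmiss : missProb P K K ≤ (1 + s)⁻¹ := by
    calc missProb P K K ≤ (1 - (K : ℝ) / P) ^ K := missProb_le_pow hK K
      _ ≤ Real.exp (-((K : ℝ) / P)) ^ K := by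
          gcongr
          exact Real.one_sub_le_exp_neg _
      _ = (Real.exp s)⁻¹ := by rw [← Real.exp_nat_mul, ← Real.exp_neg, hs]; ring_nf
      _ ≤ (1 + s)⁻¹ := by
          gcongr
          linarith [Real.add_one_le_exp s]
  rw [psf_eq_one_sub_missProb, mul_one_sub]
  have := mul_le_mul_of_nonneg_left hmiss (by positivity : 0 ≤ 1 + s)
  rw [mul_inv_cancel₀ (by positivity)] at this
  linarith

omit hK in
instance : DiscreteMeasurableSpace (KeyRing P K) := ⟨fun _ => trivial⟩

theorem isProbabilityMeasure_uniformKeyMeasure : IsProbabilityMeasure (uniformKeyMeasure P K) := by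
  have hcard : Fintype.card (KeyRing P K) ≠ 0 := by simpa using (Nat.choose_pos hK).ne'
  constructor
  rw [uniformKeyMeasure, Measure.smul_apply, Measure.count_univ, smul_eq_mul,
    ENat.card_eq_coe_fintype_card]
  exact ENNReal.inv_mul_cancel (by simpa using hcard) (by simp)

omit hK in
theorem uniformKeyMeasure_real (E : Set (KeyRing P K)) :
    (uniformKeyMeasure P K).real E = (Nat.card E : ℝ) / (P.choose K : ℝ) := by
  classical
  rw [measureReal_def, uniformKeyMeasure, Measure.smul_apply, Measure.count_apply .of_discrete,
    smul_eq_mul, ENNReal.toReal_mul, ENNReal.toReal_inv, Set.encard_eq_coe_toFinset_card]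
  simp [div_eq_inv_mul, Set.toFinset_card]

omit hK in
/-- The key rings sharing a key with `A`. -/
def meeting (A : Finset (Fin P)) : Set (KeyRing P K) := {B | (A ∩ B.1).Nonempty}

omit hK in
theorem card_compl_meeting (A : Finset (Fin P)) :
    Nat.card ((meeting A)ᶜ : Set (KeyRing P K)) = (P - A.card).choose K := by
  have e : ((meeting A)ᶜ : Set (KeyRing P K)) ≃ Finset.powersetCard K Aᶜ :=
    { toFun B := ⟨B.1.1, Finset.mem_powersetCard.2
        ⟨fun x hx => Finset.mem_compl.2 fun hA => B.2 ⟨x, Finset.mem_inter.2 ⟨hA, hx⟩⟩, B.1.2⟩⟩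
      invFun B := ⟨⟨B.1, (Finset.mem_powersetCard.1 B.2).2⟩, fun ⟨_, hx⟩ =>
        Finset.mem_compl.1 ((Finset.mem_powersetCard.1 B.2).1 (Finset.mem_inter.1 hx).2)
          (Finset.mem_inter.1 hx).1⟩
      left_inv _ := rfl
      right_inv _ := rfl }
  rw [Nat.card_congr e, Nat.card_eq_fintype_card, Fintype.card_coe, Finset.card_powersetCard,
    Finset.card_compl, Fintype.card_fin]

theorem uniformKeyMeasure_real_meeting (A : Finset (Fin P)) :
    (uniformKeyMeasure P K).real (meeting A) = 1 - missProb P K A.card := by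
  have := isProbabilityMeasure_uniformKeyMeasure hK
  rw [missProb, ← card_compl_meeting, ← uniformKeyMeasure_real,
    probReal_compl_eq_one_sub .of_discrete, sub_sub_cancel]

theorem uniformKeyMeasure_real_meeting_keyRing (A : KeyRing P K) :
    (uniformKeyMeasure P K).real (meeting A.1) = psf K P := by
  rw [uniformKeyMeasure_real_meeting hK, A.2, psf_eq_one_sub_missProb]

theorem uniformKeyMeasure_real_meeting_inter_le_mul {A A' : Finset (Fin P)} (hA : Disjoint A A') :
    (uniformKeyMeasure P K).real (meeting A ∩ meeting A') ≤
      (uniformKeyMeasure P K).real (meeting A) * (uniformKeyMeasure P K).real (meeting A') := by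
  have := isProbabilityMeasure_uniformKeyMeasure hK
  have hu := measureReal_union_add_inter (μ := uniformKeyMeasure P K)
    (s := meeting A) (t := meeting A') .of_discrete
  have hunion : (meeting A ∪ meeting A' : Set (KeyRing P K)) = meeting (A ∪ A') := by
    ext B
    simp [meeting, Finset.union_inter_distrib_right, Finset.union_nonempty]
  rw [hunion, uniformKeyMeasure_real_meeting hK, uniformKeyMeasure_real_meeting hK,
    uniformKeyMeasure_real_meeting hK, Finset.card_union_of_disjoint hA] at hu
  rw [uniformKeyMeasure_real_meeting hK, uniformKeyMeasure_real_meeting hK]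
  linarith [missProb_add_le hK A.card A'.card]

omit hK in
theorem meeting_singleton (c : Fin P) : (meeting {c} : Set (KeyRing P K)) = {B | c ∈ B.1} := by
  ext B
  by_cases hc : c ∈ B.1 <;> simp [meeting, hc]

theorem uniformKeyMeasure_real_mem (c : Fin P) :
    (uniformKeyMeasure P K).real {B | c ∈ B.1} = (K : ℝ) / P := by
  rw [← meeting_singleton, uniformKeyMeasure_real_meeting hK, Finset.card_singleton,
    missProb_one hK, sub_sub_cancel]

theorem uniformKeyMeasure_real_mem_and_mem_le {c d : Fin P} (h : c ≠ d) :
    (uniformKeyMeasure P K).real {B | c ∈ B.1 ∧ d ∈ B.1} ≤ ((K : ℝ) / P) ^ 2 := by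
  have hle := uniformKeyMeasure_real_meeting_inter_le_mul hK (Finset.disjoint_singleton.2 h)
  rwa [meeting_singleton, meeting_singleton, uniformKeyMeasure_real_mem hK,
    uniformKeyMeasure_real_mem hK, ← sq] at hle

theorem uniformKeyMeasure_real_meeting_le (A : Finset (Fin P)) :
    (uniformKeyMeasure P K).real (meeting A) ≤ A.card * ((K : ℝ) / P) := by
  have := isProbabilityMeasure_uniformKeyMeasure hK
  have hsub : (meeting A : Set (KeyRing P K)) ⊆ ⋃ c ∈ A, {B | c ∈ B.1} := by
    rintro B ⟨c, hc⟩
    exact Set.mem_biUnion (Finset.mem_inter.1 hc).1 (Finset.mem_inter.1 hc).2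
  refine (measureReal_mono hsub (measure_ne_top _ _)).trans
    ((measureReal_biUnion_finset_le _ _).trans ?_)
  simp only [uniformKeyMeasure_real_mem hK, Finset.sum_const, nsmul_eq_mul, le_refl]

theorem uniformKeyMeasure_real_exists_ne_mem_le (A A' : Finset (Fin P)) :
    (uniformKeyMeasure P K).real {B | ∃ c ∈ A, ∃ d ∈ A', c ≠ d ∧ c ∈ B.1 ∧ d ∈ B.1} ≤
      A.card * A'.card * ((K : ℝ) / P) ^ 2 := by
  have := isProbabilityMeasure_uniformKeyMeasure hK
  have hsub : {B : KeyRing P K | ∃ c ∈ A, ∃ d ∈ A', c ≠ d ∧ c ∈ B.1 ∧ d ∈ B.1} ⊆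
      ⋃ x ∈ (A ×ˢ A').filter fun x => x.1 ≠ x.2, {B | x.1 ∈ B.1 ∧ x.2 ∈ B.1} := by
    rintro B ⟨c, hc, d, hd, hcd, h⟩
    exact Set.mem_biUnion (x := (c, d)) (by simp [hc, hd, hcd]) h
  have hcard : (((A ×ˢ A').filter fun x => x.1 ≠ x.2).card : ℝ) ≤ A.card * A'.card := by
    exact_mod_cast (Finset.card_filter_le _ _).trans (Finset.card_product A A').le
  calc (uniformKeyMeasure P K).real {B | ∃ c ∈ A, ∃ d ∈ A', c ≠ d ∧ c ∈ B.1 ∧ d ∈ B.1}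
      ≤ ∑ x ∈ (A ×ˢ A').filter fun x => x.1 ≠ x.2,
          (uniformKeyMeasure P K).real {B | x.1 ∈ B.1 ∧ x.2 ∈ B.1} :=
        (measureReal_mono hsub (measure_ne_top _ _)).trans (measureReal_biUnion_finset_le _ _)
    _ ≤ ((A ×ˢ A').filter fun x => x.1 ≠ x.2).card * ((K : ℝ) / P) ^ 2 := by
        rw [← nsmul_eq_mul]
        exact Finset.sum_le_card_nsmul _ _ _ fun x hx =>
          uniformKeyMeasure_real_mem_and_mem_le hK (Finset.mem_filter.1 hx).2
    _ ≤ A.card * A'.card * ((K : ℝ) / P) ^ 2 := by gcongr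

theorem uniformKeyMeasure_real_two_le_card_inter_le (A : Finset (Fin P)) :
    (uniformKeyMeasure P K).real {B | 2 ≤ (A ∩ B.1).card} ≤
      A.card * A.card * ((K : ℝ) / P) ^ 2 := by
  have := isProbabilityMeasure_uniformKeyMeasure hK
  refine (measureReal_mono ?_ (measure_ne_top _ _)).trans
    (uniformKeyMeasure_real_exists_ne_mem_le hK A A)
  intro B (hB : 1 < (A ∩ B.1).card)
  obtain ⟨c, hc, d, hd, hcd⟩ := Finset.one_lt_card.1 hB
  rw [Finset.mem_inter] at hc hd
  exact ⟨c, hc.1, d, hd.1, hcd, hc.2, hd.2⟩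

theorem uniformKeyMeasure_real_meeting_inter_le (A A' : Finset (Fin P)) :
    (uniformKeyMeasure P K).real (meeting A ∩ meeting A') ≤
      (A ∩ A').card * ((K : ℝ) / P) + A.card * A'.card * ((K : ℝ) / P) ^ 2 := by
  have := isProbabilityMeasure_uniformKeyMeasure hK
  have hsub : (meeting A ∩ meeting A' : Set (KeyRing P K)) ⊆ meeting (A ∩ A') ∪
      {B | ∃ c ∈ A, ∃ d ∈ A', c ≠ d ∧ c ∈ B.1 ∧ d ∈ B.1} := by
    rintro B ⟨⟨c, hc⟩, d, hd⟩
    rw [Finset.mem_inter] at hc hd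
    by_cases hcd : c = d
    · subst hcd
      exact Or.inl ⟨c, Finset.mem_inter.2 ⟨Finset.mem_inter.2 ⟨hc.1, hd.1⟩, hc.2⟩⟩
    · exact Or.inr ⟨c, hc.1, d, hd.1, hcd, hc.2, hd.2⟩
  calc (uniformKeyMeasure P K).real (meeting A ∩ meeting A')
      ≤ (uniformKeyMeasure P K).real (meeting (A ∩ A')) + (uniformKeyMeasure P K).real
          {B | ∃ c ∈ A, ∃ d ∈ A', c ≠ d ∧ c ∈ B.1 ∧ d ∈ B.1} :=
        (measureReal_mono hsub (measure_ne_top _ _)).trans (measureReal_union_le _ _)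
    _ ≤ _ := add_le_add (uniformKeyMeasure_real_meeting_le hK _)
        (uniformKeyMeasure_real_exists_ne_mem_le hK A A')

theorem psf_le_sq_div : psf K P ≤ (K : ℝ) ^ 2 / P := by
  obtain ⟨s, -, hs⟩ := Finset.exists_subset_card_eq (s := (Finset.univ : Finset (Fin P)))
    (n := K) (by simpa using hK)
  rw [← uniformKeyMeasure_real_meeting_keyRing hK ⟨s, hs⟩]
  refine (uniformKeyMeasure_real_meeting_le hK s).trans_eq ?_
  rw [hs]
  ring

end UniformKeyRing

section RootExploration

theorem isProbabilityMeasure_bern {p : ℝ} (h0 : 0 ≤ p) (h1 : p ≤ 1) :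
    IsProbabilityMeasure (bern p) := by
  constructor
  simp only [bern, Measure.add_apply, Measure.smul_apply, measure_univ, smul_eq_mul, mul_one]
  rw [← ENNReal.ofReal_add h0 (sub_nonneg.2 h1), add_sub_cancel, ENNReal.ofReal_one]

theorem bern_real_true {p : ℝ} (h0 : 0 ≤ p) : (bern p).real {true} = p := by
  simp [measureReal_def, bern, h0]

theorem pi_bern_real_eval_true {R : Type*} [Fintype R] {p : ℝ} (h0 : 0 ≤ p) (h1 : p ≤ 1) (r : R) :
    (Measure.pi fun _ : R => bern p).real {c | c r = true} = p := by
  have := isProbabilityMeasure_bern h0 h1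
  have h := (measurePreserving_eval (fun _ : R => bern p) r).measureReal_preimage
    (measurableSet_singleton true).nullMeasurableSet
  rwa [bern_real_true h0] at h

/-- The vertices outside the range of a family of roots. -/
abbrev NonRoot {n : ℕ} {R : Type*} (ρ : R → Fin n) : Type := {z : Fin n // z ∉ Set.range ρ}

/-- The part of a sample seen from the roots: their key rings and, for every other vertex, its
key ring together with its channels to the roots. -/
def exploreRoots {n K P : ℕ} {R : Type*} (ρ : R → Fin n) (ω : GonSpace n K P) :
    (R → KeyRing P K) × (NonRoot ρ → KeyRing P K × (R → Bool)) :=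
  (fun r => ω.1 (ρ r), fun z => (ω.1 z, fun r => ω.2 s(ρ r, z)))

/-- The law of the key ring of a non-root vertex and of its channels to the roots. -/
def nonRootLaw (P K : ℕ) (p : ℝ) (R : Type*) [Fintype R] : Measure (KeyRing P K × (R → Bool)) :=
  (uniformKeyMeasure P K).prod (Measure.pi fun _ : R => bern p)

/-- The outcomes for a non-root vertex that make it adjacent to the root `r` with key ring `A`. -/
def rootAdj {P K : ℕ} {R : Type*} (A : KeyRing P K) (r : R) : Set (KeyRing P K × (R → Bool)) :=
  meeting A.1 ×ˢ {c | c r = true}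

variable {n P K : ℕ} {p : ℝ} {R : Type*}

theorem card_nonRoot [Fintype R] {ρ : R → Fin n} (hρ : Function.Injective ρ)
    [Fintype (NonRoot ρ)] : Fintype.card (NonRoot ρ) = n - Fintype.card R := by
  classical
  rw [Fintype.card_subtype_compl, Fintype.card_fin]
  exact congrArg (n - ·) (Set.card_range_of_injective hρ)

theorem card_hits_rootAdj_le_gDeg {ρ : R → Fin n} [Fintype (NonRoot ρ)] (ω : GonSpace n K P)
    (r : R) :
    (hits (rootAdj ((exploreRoots ρ ω).1 r) r) (exploreRoots ρ ω).2).card ≤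
      gDeg (gonGraph ω) (ρ r) := by
  rw [card_hits]
  refine Nat.card_le_card_of_injective
    (fun z => ⟨z.1.1, fun h => z.1.2 ⟨r, h⟩, z.2.1, z.2.2⟩) fun z z' h => ?_
  exact Subtype.ext (Subtype.ext (Subtype.mk.inj h))

theorem card_hits_rootAdj_eq_gDeg [Unique R] {ρ : R → Fin n} [Fintype (NonRoot ρ)]
    (ω : GonSpace n K P) (r : R) :
    (hits (rootAdj ((exploreRoots ρ ω).1 r) r) (exploreRoots ρ ω).2).card =
      gDeg (gonGraph ω) (ρ r) := by
  refine (card_hits_rootAdj_le_gDeg ω r).antisymm ?_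
  rw [card_hits]
  refine Nat.card_le_card_of_injective
    (fun w => ⟨⟨w.1, ?_⟩, w.2.2.1, w.2.2.2⟩) fun z z' h => ?_
  · rintro ⟨r', h⟩
    exact w.2.1 (Subsingleton.elim r r' ▸ h)
  · exact Subtype.ext (congrArg (fun z => z.1.1) h)

theorem preimage_exploreRoots_singleton (ρ : R → Fin n) (A : R → KeyRing P K)
    (d : NonRoot ρ → KeyRing P K × (R → Bool)) :
    exploreRoots ρ ⁻¹' {(A, d)} =
      {S | ∀ i : R ⊕ NonRoot ρ, S (Sum.elim ρ Subtype.val i) = Sum.elim A (fun z => (d z).1) i} ×ˢ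
        {C | ∀ i : R × NonRoot ρ, C s(ρ i.1, i.2) = (d i.2).2 i.1} := by
  ext ω
  simp only [exploreRoots, Set.mem_preimage, Set.mem_singleton_iff, funext_iff,
    Set.mem_prod, Set.mem_ofPred_eq, Sum.forall, Sum.elim_inl, Sum.elim_inr, Prod.forall,
    Prod.ext_iff, forall_and, and_assoc]
  rw [forall_comm (α := R)]

theorem injective_channel_nonRoot {ρ : R → Fin n} (hρ : Function.Injective ρ) :
    Function.Injective fun i : R × NonRoot ρ => s(ρ i.1, (i.2 : Fin n)) := by
  rintro ⟨r, z⟩ ⟨r', z'⟩ h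
  rcases Sym2.eq_iff.1 h with ⟨h1, h2⟩ | ⟨h1, -⟩
  · exact Prod.ext (hρ h1) (Subtype.ext h2)
  · exact absurd ⟨r, h1⟩ z'.2

variable (hK : K ≤ P) (h0 : 0 ≤ p) (h1 : p ≤ 1)

include hK h0 h1

theorem isProbabilityMeasure_gonMeasure : IsProbabilityMeasure (gonMeasure n K P p) := by
  have := isProbabilityMeasure_uniformKeyMeasure hK
  have := isProbabilityMeasure_bern h0 h1
  exact Measure.prod.instIsProbabilityMeasure _ _

variable [Fintype R]

theorem isProbabilityMeasure_nonRootLaw : IsProbabilityMeasure (nonRootLaw P K p R) := by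
  have := isProbabilityMeasure_uniformKeyMeasure hK
  have := isProbabilityMeasure_bern h0 h1
  exact Measure.prod.instIsProbabilityMeasure _ _

open Classical in
theorem map_exploreRoots {ρ : R → Fin n} (hρ : Function.Injective ρ) :
    (gonMeasure n K P p).map (exploreRoots ρ) =
      (Measure.pi fun _ : R => uniformKeyMeasure P K).prod
        (Measure.pi fun _ : NonRoot ρ => nonRootLaw P K p R) := by
  have := isProbabilityMeasure_uniformKeyMeasure hK
  have := isProbabilityMeasure_bern h0 h1
  have := isProbabilityMeasure_nonRootLaw (R := R) hK h0 h1
  refine Measure.ext_of_singleton fun ⟨A, d⟩ => ?_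
  have hinj : Function.Injective (Sum.elim ρ Subtype.val : R ⊕ NonRoot ρ → Fin n) :=
    hρ.sumElim Subtype.val_injective fun r z h => z.2 ⟨r, h⟩
  have hd (z : NonRoot ρ) : nonRootLaw P K p R {d z} =
      uniformKeyMeasure P K {(d z).1} * ∏ r, bern p {(d z).2 r} := by
    rw [nonRootLaw, ← Prod.mk.eta (p := d z), ← Set.singleton_prod_singleton, Measure.prod_prod,
      Measure.pi_singleton]
  rw [Measure.map_apply .of_discrete (measurableSet_singleton _),
    preimage_exploreRoots_singleton, gonMeasure, Measure.prod_prod, pi_setOf_comp_eq _ hinj,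
    pi_setOf_comp_eq _ (injective_channel_nonRoot hρ), ← Set.singleton_prod_singleton,
    Measure.prod_prod, Measure.pi_singleton, Measure.pi_singleton, Fintype.prod_sum_type,
    Fintype.prod_prod_type_right, mul_assoc, ← Finset.prod_mul_distrib]
  simp only [Sum.elim_inl, Sum.elim_inr, hd]

omit hK h0 h1 [Fintype R] in
theorem measurableSet_rootAdj (A : KeyRing P K) (r : R) : MeasurableSet (rootAdj A r) :=
  MeasurableSet.prod .of_discrete (measurableSet_eq_fun (by fun_prop) (by fun_prop))

theorem nonRootLaw_real_rootAdj (A : KeyRing P K) (r : R) :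
    (nonRootLaw P K p R).real (rootAdj A r) = pef K P p := by
  have := isProbabilityMeasure_uniformKeyMeasure hK
  have := isProbabilityMeasure_bern h0 h1
  rw [nonRootLaw, rootAdj, measureReal_prod_prod, uniformKeyMeasure_real_meeting_keyRing hK,
    pi_bern_real_eval_true h0 h1, pef, mul_comm]

theorem nonRootLaw_real_rootAdj_inter (A A' : KeyRing P K) :
    (nonRootLaw P K p (Fin 2)).real (rootAdj A 0 ∩ rootAdj A' 1) =
      p ^ 2 * (uniformKeyMeasure P K).real (meeting A.1 ∩ meeting A'.1) := by
  have := isProbabilityMeasure_uniformKeyMeasure hK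
  have := isProbabilityMeasure_bern h0 h1
  have hset : {c : Fin 2 → Bool | c 0 = true} ∩ {c | c 1 = true} = {fun _ => true} := by
    ext c
    simp only [Set.mem_inter_iff, Set.mem_ofPred_eq, Set.mem_singleton_iff, funext_iff,
      Fin.forall_fin_two]
  rw [nonRootLaw, rootAdj, rootAdj, Set.prod_inter_prod, hset, measureReal_prod_prod,
    measureReal_def (Measure.pi _), Measure.pi_singleton, ENNReal.toReal_prod, mul_comm]
  simp only [← measureReal_def, bern_real_true h0, Finset.prod_const, Finset.card_univ,
    Fintype.card_fin]

theorem gonMeasure_real_gDeg_lt {N : ℕ} (x : Fin (N + 1)) (k : ℕ) :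
    (gonMeasure (N + 1) K P p).real {ω | gDeg (gonGraph ω) x < k} =
      partialBinomialSum (1 - pef K P p) (pef K P p) N k := by
  classical
  have := isProbabilityMeasure_uniformKeyMeasure hK
  have := isProbabilityMeasure_nonRootLaw (R := Unit) hK h0 h1
  let ρ : Unit → Fin (N + 1) := fun _ => x
  have hρ : Function.Injective ρ := Function.injective_of_subsingleton ρ
  let F : Set ((Unit → KeyRing P K) × (NonRoot ρ → KeyRing P K × (Unit → Bool))) :=
    {a | (hits (rootAdj (a.1 ()) ()) a.2).card < k}
  have hF : MeasurableSet F := F.toFinite.measurableSet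
  have hset : {ω : GonSpace (N + 1) K P | gDeg (gonGraph ω) x < k} = exploreRoots ρ ⁻¹' F := by
    ext ω
    change gDeg (gonGraph ω) (ρ ()) < k ↔ _
    rw [← card_hits_rootAdj_eq_gDeg]
    rfl
  have hslice (A : Unit → KeyRing P K) :
      (Measure.pi fun _ : NonRoot ρ => nonRootLaw P K p Unit).real (Prod.mk A ⁻¹' F) =
        partialBinomialSum (1 - pef K P p) (pef K P p) N k := by
    have h := pi_real_card_hits_lt (Z := NonRoot ρ) (ν := nonRootLaw P K p Unit)
      (measurableSet_rootAdj (A ()) ()) k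
    rwa [nonRootLaw_real_rootAdj hK h0 h1, card_nonRoot hρ, Fintype.card_unit,
      Nat.add_sub_cancel] at h
  rw [hset, ← map_measureReal_apply .of_discrete hF, map_exploreRoots hK h0 h1 hρ,
    measureReal_prod_eq_integral _ _ hF]
  simp only [hslice, integral_const, probReal_univ, one_smul]

variable {Z : Type*} [Fintype Z]

theorem pi_nonRootLaw_real_le_of_disjoint (hq : pef K P p < 1) {A A' : KeyRing P K}
    (hA : Disjoint A.1 A'.1) (k : ℕ) :
    (Measure.pi fun _ : Z => nonRootLaw P K p (Fin 2)).real
        {t | (hits (rootAdj A 0) t).card < k ∧ (hits (rootAdj A' 1) t).card < k} ≤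
      ((1 - pef K P p)⁻¹ ^ k *
        partialBinomialSum (1 - pef K P p) (pef K P p) (Fintype.card Z) k) ^ 2 := by
  have := isProbabilityMeasure_nonRootLaw (R := Fin 2) hK h0 h1
  have hadj := nonRootLaw_real_rootAdj (R := Fin 2) hK h0 h1
  have hneg := uniformKeyMeasure_real_meeting_inter_le_mul hK hA
  rw [uniformKeyMeasure_real_meeting_keyRing hK, uniformKeyMeasure_real_meeting_keyRing hK] at hneg
  have h := pi_real_card_hits_lt_and_card_hits_lt_le (Z := Z) (ν := nonRootLaw P K p (Fin 2))
    (measurableSet_rootAdj A 0) (measurableSet_rootAdj A' 1) (by rwa [hadj]) (by rwa [hadj])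
    (by
      rw [nonRootLaw_real_rootAdj_inter hK h0 h1, hadj, hadj, pef, mul_mul_mul_comm, ← sq]
      gcongr) k
  rwa [hadj, hadj, ← sq] at h

theorem pi_nonRootLaw_real_le_of_meeting_inter_le (hq : pef K P p ≤ 1 / 40) {A A' : KeyRing P K}
    {a : ℝ} (ha : p ^ 2 * (uniformKeyMeasure P K).real (meeting A.1 ∩ meeting A'.1) ≤ a) {r : ℕ}
    (hr : 2 * r ≤ Fintype.card Z + 1) :
    (Measure.pi fun _ : Z => nonRootLaw P K p (Fin 2)).real
        {t | (hits (rootAdj A 0) t).card < r + 1 ∧ (hits (rootAdj A' 1) t).card < r + 1} ≤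
      64 ^ r * r.factorial ^ 2 *
          partialBinomialSum (1 - pef K P p) (pef K P p) (Fintype.card Z) (r + 1) ^ 2 *
        Real.exp (11 / 10 * (Fintype.card Z * a)) := by
  have := isProbabilityMeasure_nonRootLaw (R := Fin 2) hK h0 h1
  have hadj := nonRootLaw_real_rootAdj (R := Fin 2) hK h0 h1
  have hunion := measureReal_union_add_inter (μ := nonRootLaw P K p (Fin 2))
    (s := rootAdj A 0) (measurableSet_rootAdj A' 1)
  rw [hadj, hadj, ← two_mul, ← eq_sub_iff_add_eq] at hunion
  have hinter : (nonRootLaw P K p (Fin 2)).real (rootAdj A 0 ∩ rootAdj A' 1) ≤ pef K P p :=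
    (measureReal_mono Set.inter_subset_left).trans (hadj A 0).le
  rw [← nonRootLaw_real_rootAdj_inter hK h0 h1] at ha
  have h := pi_real_card_hits_lt_and_card_hits_lt_le_union (Z := Z)
    (ν := nonRootLaw P K p (Fin 2)) (measurableSet_rootAdj A 0) (measurableSet_rootAdj A' 1) r
  rw [hunion] at h
  refine h.trans ((partialBinomialSum_two_mul_sub_le measureReal_nonneg hinter hq hr).trans ?_)
  gcongr

omit h0 h1 in
theorem pi_uniformKeyMeasure_real_inter_nonempty_le :
    (Measure.pi fun _ : Fin 2 => uniformKeyMeasure P K).real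
        {A | ((A 0).1 ∩ (A 1).1).Nonempty} ≤ (K : ℝ) ^ 2 / P := by
  have := isProbabilityMeasure_uniformKeyMeasure hK
  rw [pi_finTwo_real_eq_integral _ .of_discrete]
  calc _ = ∫ _, psf K P ∂uniformKeyMeasure P K :=
        integral_congr_ae (.of_forall (uniformKeyMeasure_real_meeting_keyRing hK))
    _ ≤ (K : ℝ) ^ 2 / P := by simpa using psf_le_sq_div hK

omit h0 h1 in
theorem pi_uniformKeyMeasure_real_two_le_card_inter_le :
    (Measure.pi fun _ : Fin 2 => uniformKeyMeasure P K).real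
        {A | 2 ≤ ((A 0).1 ∩ (A 1).1).card} ≤ ((K : ℝ) ^ 2 / P) ^ 2 := by
  have := isProbabilityMeasure_uniformKeyMeasure hK
  rw [pi_finTwo_real_eq_integral _ .of_discrete]
  calc _ ≤ ∫ _, ((K : ℝ) ^ 2 / P) ^ 2 ∂uniformKeyMeasure P K := by
        refine integral_mono .of_finite .of_finite fun A => ?_
        refine (uniformKeyMeasure_real_two_le_card_inter_le hK A.1).trans_eq ?_
        rw [A.2]
        ring
    _ = ((K : ℝ) ^ 2 / P) ^ 2 := by simp

open Classical in
theorem gonMeasure_real_gDeg_lt_and_gDeg_lt_le_integral {N : ℕ} {x y : Fin (N + 2)} (hxy : x ≠ y)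
    (k : ℕ) :
    (gonMeasure (N + 2) K P p).real {ω | gDeg (gonGraph ω) x < k ∧ gDeg (gonGraph ω) y < k} ≤
      ∫ A : Fin 2 → KeyRing P K,
        (Measure.pi fun _ : NonRoot ![x, y] => nonRootLaw P K p (Fin 2)).real
          {t | (hits (rootAdj (A 0) 0) t).card < k ∧ (hits (rootAdj (A 1) 1) t).card < k}
        ∂Measure.pi fun _ => uniformKeyMeasure P K := by
  have := isProbabilityMeasure_gonMeasure (n := N + 2) hK h0 h1
  have := isProbabilityMeasure_nonRootLaw (R := Fin 2) hK h0 h1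
  let F : Set ((Fin 2 → KeyRing P K) × (NonRoot ![x, y] → KeyRing P K × (Fin 2 → Bool))) :=
    {a | (hits (rootAdj (a.1 0) 0) a.2).card < k ∧ (hits (rootAdj (a.1 1) 1) a.2).card < k}
  have hF : MeasurableSet F := F.toFinite.measurableSet
  have hsub : {ω : GonSpace (N + 2) K P | gDeg (gonGraph ω) x < k ∧ gDeg (gonGraph ω) y < k} ⊆
      exploreRoots ![x, y] ⁻¹' F := fun ω ⟨hx, hy⟩ =>
    ⟨(card_hits_rootAdj_le_gDeg ω 0).trans_lt hx, (card_hits_rootAdj_le_gDeg ω 1).trans_lt hy⟩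
  refine (measureReal_mono hsub).trans_eq ?_
  rw [← map_measureReal_apply .of_discrete hF,
    map_exploreRoots hK h0 h1 (injective_pair_iff_ne.2 hxy), measureReal_prod_eq_integral _ _ hF]
  rfl

theorem pi_nonRootLaw_real_le (hq : pef K P p ≤ 1 / 40) {r : ℕ}
    (hr : 2 * r ≤ Fintype.card Z + 1) (A : Fin 2 → KeyRing P K) :
    (Measure.pi fun _ : Z => nonRootLaw P K p (Fin 2)).real
        {t | (hits (rootAdj (A 0) 0) t).card < r + 1 ∧ (hits (rootAdj (A 1) 1) t).card < r + 1} ≤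
      ((1 - pef K P p)⁻¹ ^ (r + 1) *
          partialBinomialSum (1 - pef K P p) (pef K P p) (Fintype.card Z) (r + 1)) ^ 2 +
        {A : Fin 2 → KeyRing P K | ((A 0).1 ∩ (A 1).1).Nonempty}.indicator 1 A *
          (64 ^ r * r.factorial ^ 2 *
            partialBinomialSum (1 - pef K P p) (pef K P p) (Fintype.card Z) (r + 1) ^ 2 *
            Real.exp (11 / 10 *
              (Fintype.card Z * (p ^ 2 * ((K : ℝ) / P + ((K : ℝ) ^ 2 / P) ^ 2))))) +
        {A : Fin 2 → KeyRing P K | 2 ≤ ((A 0).1 ∩ (A 1).1).card}.indicator 1 A *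
          (64 ^ r * r.factorial ^ 2 *
            partialBinomialSum (1 - pef K P p) (pef K P p) (Fintype.card Z) (r + 1) ^ 2 *
            Real.exp (11 / 10 * (Fintype.card Z * (p * pef K P p)))) := by
  have := isProbabilityMeasure_uniformKeyMeasure hK
  have hle {a : ℝ} := pi_nonRootLaw_real_le_of_meeting_inter_le (Z := Z) (A := A 0) (A' := A 1)
    hK h0 h1 hq (a := a) (hr := hr)
  simp only [Set.indicator_apply, Set.mem_ofPred_eq, Pi.one_apply]
  rcases Nat.lt_trichotomy ((A 0).1 ∩ (A 1).1).card 1 with hc | hc | hc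
  · have hempty : (A 0).1 ∩ (A 1).1 = ∅ := Finset.card_eq_zero.1 (Nat.lt_one_iff.1 hc)
    rw [if_neg (by simp [hempty]), if_neg (by simp [hempty]), zero_mul, zero_mul, add_zero,
      add_zero]
    exact pi_nonRootLaw_real_le_of_disjoint hK h0 h1 (by linarith)
      (Finset.disjoint_iff_inter_eq_empty.2 hempty) _
  · rw [if_pos (Finset.card_pos.1 (by omega)), if_neg (by omega), one_mul, zero_mul, add_zero]
    refine (hle ?_).trans (le_add_of_nonneg_left (sq_nonneg _))
    have hmeet := uniformKeyMeasure_real_meeting_inter_le hK (A 0).1 (A 1).1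
    rw [hc, (A 0).2, (A 1).2] at hmeet
    refine mul_le_mul_of_nonneg_left (hmeet.trans_eq ?_) (sq_nonneg p)
    push_cast
    ring
  · rw [if_pos (Finset.card_pos.1 (by omega)), if_pos (by omega), one_mul, one_mul]
    refine (hle ?_).trans (le_add_of_nonneg_left (by positivity))
    calc _ ≤ p ^ 2 * psf K P := by
          gcongr
          exact (measureReal_mono Set.inter_subset_left (measure_ne_top _ _)).trans_eq
            (uniformKeyMeasure_real_meeting_keyRing hK (A 0))
      _ = p * pef K P p := by rw [pef]; ring

/-- The contribution of intersecting key rings to the joint law of two degrees: the two summands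
bound the probability that two rings share at least one, respectively at least two, keys, times
the correlation which such an overlap creates through the `N` remaining vertices. -/
def sharedKeyCorrection (N K P : ℕ) (p : ℝ) : ℝ :=
  (K : ℝ) ^ 2 / P * Real.exp (11 / 10 * (N * (p ^ 2 * ((K : ℝ) / P + ((K : ℝ) ^ 2 / P) ^ 2)))) +
    ((K : ℝ) ^ 2 / P) ^ 2 * Real.exp (11 / 10 * (N * (p * pef K P p)))

theorem gonMeasure_real_gDeg_lt_and_gDeg_lt_le (hq : pef K P p ≤ 1 / 40) {N r : ℕ}
    (hr : 2 * r ≤ N + 1) {x y : Fin (N + 2)} (hxy : x ≠ y) :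
    (gonMeasure (N + 2) K P p).real
        {ω | gDeg (gonGraph ω) x < r + 1 ∧ gDeg (gonGraph ω) y < r + 1} ≤
      ((1 - pef K P p)⁻¹ ^ (2 * (r + 1)) + 64 ^ r * r.factorial ^ 2 * sharedKeyCorrection N K P p) *
        partialBinomialSum (1 - pef K P p) (pef K P p) N (r + 1) ^ 2 := by
  classical
  have := isProbabilityMeasure_uniformKeyMeasure hK
  have hcard : Fintype.card (NonRoot ![x, y]) = N := by
    rw [card_nonRoot (injective_pair_iff_ne.2 hxy), Fintype.card_fin, Nat.add_sub_cancel]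
  have hslice := pi_nonRootLaw_real_le (Z := NonRoot ![x, y]) hK h0 h1 hq (hcard.symm ▸ hr)
  rw [hcard] at hslice
  refine (gonMeasure_real_gDeg_lt_and_gDeg_lt_le_integral hK h0 h1 hxy (r + 1)).trans
    ((integral_le_add_mul_add_mul .of_finite .of_discrete .of_discrete hslice).trans ?_)
  set C : ℝ := 64 ^ r * r.factorial ^ 2 * partialBinomialSum _ _ N (r + 1) ^ 2
  grw [pi_uniformKeyMeasure_real_inter_nonempty_le hK,
    pi_uniformKeyMeasure_real_two_le_card_inter_le hK]
  refine le_of_eq ?_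
  rw [sharedKeyCorrection]
  ring

end RootExploration

section Degree

variable {V : Type*} {G : SimpleGraph V} {k : ℕ}

theorem KConnected.le_gDeg [Fintype V] (hG : KConnected G k) (hk : k < Fintype.card V) (v : V) :
    k ≤ gDeg G v := by
  classical
  by_contra! hv
  have hcard : (G.neighborFinset v).card = gDeg G v := by
    rw [G.card_neighborFinset_eq_degree, gDeg, Nat.card_eq_fintype_card]
    exact (G.card_neighborSet_eq_degree v).symm
  obtain ⟨w, hw⟩ : ∃ w, w ∉ insert v (G.neighborFinset v) := by
    by_contra! h
    have := Finset.card_insert_le v (G.neighborFinset v)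
    rw [Finset.eq_univ_iff_forall.2 h, Finset.card_univ] at this
    omega
  rw [Finset.mem_insert, not_or] at hw
  obtain ⟨walk⟩ := (hG (G.neighborFinset v) (by omega)).preconnected
    ⟨v, by simp⟩ ⟨w, by simpa using hw.2⟩
  cases walk with
  | nil => exact hw.1 rfl
  | @cons _ u _ hadj _ => exact u.2 (by simpa using hadj)

theorem le_minDeg_iff [Nonempty V] : k ≤ minDeg G ↔ ∀ v, k ≤ gDeg G v :=
  (le_csInf_iff (OrderBot.bddBelow _) (Set.range_nonempty _)).trans Set.forall_mem_range

end Degree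

section SecondMomentBound

variable {N K P r : ℕ} {p : ℝ}

theorem partialBinomialSum_pos {q : ℝ} (h0 : 0 ≤ q) (h1 : q < 1) (N r : ℕ) :
    0 < partialBinomialSum (1 - q) q N (r + 1) := by
  have : 0 < 1 - q := by linarith
  refine Finset.sum_pos' (fun j _ => by positivity) ⟨0, by simp, ?_⟩
  simp only [Nat.choose_zero_right, Nat.cast_one, pow_zero, one_mul, Nat.sub_zero]
  positivity

theorem sharedKeyCorrection_nonneg : 0 ≤ sharedKeyCorrection N K P p := by
  rw [sharedKeyCorrection]
  positivity

theorem gonMeasure_real_forall_le_gDeg_le (hK : K ≤ P) (h0 : 0 ≤ p) (h1 : p ≤ 1)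
    (hq : pef K P p ≤ 1 / 40) (hr : 2 * r ≤ N + 1) :
    (gonMeasure (N + 2) K P p).real {ω | ∀ v, r + 1 ≤ gDeg (gonGraph ω) v} ≤
      1 / ((N + 2 : ℕ) * partialBinomialSum (1 - pef K P p) (pef K P p) (N + 1) (r + 1)) +
        ((1 - pef K P p)⁻¹ ^ 2 * ((1 - pef K P p)⁻¹ ^ (2 * (r + 1)) +
          64 ^ r * r.factorial ^ 2 * sharedKeyCorrection N K P p) - 1) := by
  have := isProbabilityMeasure_gonMeasure (n := N + 2) hK h0 h1
  have hq0 : 0 ≤ pef K P p := mul_nonneg h0 psf_nonneg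
  have hq1 : 0 < 1 - pef K P p := by linarith
  have hcor : 0 ≤ sharedKeyCorrection N K P p := sharedKeyCorrection_nonneg
  have hsum : partialBinomialSum (1 - pef K P p) (pef K P p) N (r + 1) ≤
      (1 - pef K P p)⁻¹ * partialBinomialSum (1 - pef K P p) (pef K P p) (N + 1) (r + 1) :=
    (le_inv_mul_iff₀ hq1).2 (mul_partialBinomialSum_le_succ hq0 (by linarith) N (r + 1))
  have hsum0 := partialBinomialSum_nonneg hq1.le hq0 N (r + 1)
  simpa only [Set.mem_ofPred_eq, not_lt, Fintype.card_fin] using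
    measureReal_forall_notMem_le (μ := gonMeasure (N + 2) K P p)
      (E := fun x => {ω | gDeg (gonGraph ω) x < r + 1}) (fun _ => .of_discrete) (by simp)
      (partialBinomialSum_pos hq0 (by linarith) (N + 1) r)
      (c := (1 - pef K P p)⁻¹ ^ 2 * ((1 - pef K P p)⁻¹ ^ (2 * (r + 1)) +
        64 ^ r * r.factorial ^ 2 * sharedKeyCorrection N K P p)) (by positivity)
      (fun x => gonMeasure_real_gDeg_lt hK h0 h1 x (r + 1))
      fun x y hxy => by
        refine (gonMeasure_real_gDeg_lt_and_gDeg_lt_le hK h0 h1 hq hr hxy).trans ?_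
        rw [mul_comm (_ ^ 2), mul_assoc (_ + _), ← mul_pow]
        gcongr

theorem mul_sq_div_le_mul_pef (hK : K ≤ P) (h0 : 0 ≤ p) (hs : (K : ℝ) ^ 2 / P ≤ 1 / 10) :
    p * ((K : ℝ) ^ 2 / P) ≤ 11 / 10 * pef K P p := by
  have hpsf := psf_nonneg (K := K) (P := P)
  calc p * ((K : ℝ) ^ 2 / P) ≤ p * ((1 + (K : ℝ) ^ 2 / P) * psf K P) := by
        gcongr
        exact sq_div_le_one_add_mul_psf hK
    _ ≤ p * ((1 + 1 / 10) * psf K P) := by gcongr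
    _ = 11 / 10 * pef K P p := by rw [pef]; ring

theorem sharedKeyCorrection_le {l : ℝ} (hK2 : 2 ≤ K) (hK : K ≤ P) (h0 : 0 ≤ p)
    (hs : (K : ℝ) ^ 2 / P ≤ 1 / 10) (hl : N * pef K P p ≤ 11 / 10 * l)
    (hsq : N * pef K P p ^ 2 ≤ 1 / 2) :
    sharedKeyCorrection N K P p ≤
      Real.exp 1 * ((K : ℝ) ^ 2 / P * Real.exp (2 / 3 * (p * l))) +
        ((K : ℝ) ^ 2 / P * Real.exp (2 / 3 * (p * l))) ^ 2 := by
  have hs0 : 0 ≤ (K : ℝ) ^ 2 / P := by positivity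
  have hps := mul_sq_div_le_mul_pef hK h0 hs
  -- Without the factor `1 / 2` the first exponent would exceed `log n`, the order of
  -- `log (P / K ^ 2)`.
  have hKP : (K : ℝ) / P ≤ (K : ℝ) ^ 2 / P / 2 := by
    have : (2 : ℝ) ≤ K := by exact_mod_cast hK2
    rw [div_right_comm]
    gcongr
    nlinarith
  rw [sharedKeyCorrection]
  set s : ℝ := (K : ℝ) ^ 2 / P
  set q := pef K P p
  have hpq : N * (p * q) ≤ 11 / 10 * (p * l) := by
    nlinarith [mul_le_mul_of_nonneg_left hl h0]
  have hpq0 : 0 ≤ N * (p * q) :=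
    mul_nonneg N.cast_nonneg (mul_nonneg h0 (mul_nonneg h0 psf_nonneg))
  have hone : 11 / 10 * (N * (p ^ 2 * ((K : ℝ) / P + s ^ 2))) ≤ 1 + 2 / 3 * (p * l) := by
    have : p ^ 2 * ((K : ℝ) / P + s ^ 2) ≤ 11 / 20 * (p * q) + 121 / 100 * q ^ 2 := by
      calc p ^ 2 * ((K : ℝ) / P + s ^ 2) ≤ p ^ 2 * (s / 2 + s ^ 2) := by gcongr
        _ = p * (p * s) / 2 + (p * s) ^ 2 := by ring
        _ ≤ p * (11 / 10 * q) / 2 + (11 / 10 * q) ^ 2 := by gcongr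
        _ = _ := by ring
    nlinarith [mul_le_mul_of_nonneg_left this (Nat.cast_nonneg (α := ℝ) N)]
  have htwo : 11 / 10 * (N * (p * q)) ≤ 2 * (2 / 3 * (p * l)) := by linarith
  calc _ ≤ s * Real.exp (1 + 2 / 3 * (p * l)) + s ^ 2 * Real.exp (2 * (2 / 3 * (p * l))) := by
        gcongr
    _ = _ := by
        rw [Real.exp_add, two_mul (2 / 3 * (p * l)), Real.exp_add]
        ring

end SecondMomentBound

section LogarithmicAsymptotics

theorem tendsto_log_natCast_atTop : Tendsto (fun n : ℕ => Real.log n) atTop atTop :=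
  Real.tendsto_log_atTop.comp tendsto_natCast_atTop_atTop

theorem tendsto_log_pow_div_exp (m : ℕ) {b : ℝ} (hb : 0 < b) :
    Tendsto (fun n : ℕ => Real.log n ^ m / Real.exp (b * Real.log n)) atTop (nhds 0) :=
  (isLittleO_pow_exp_pos_mul_atTop m hb).tendsto_div_nhds_zero.comp tendsto_log_natCast_atTop

theorem tendsto_log_pow_div_natCast (m : ℕ) :
    Tendsto (fun n : ℕ => Real.log n ^ m / n) atTop (nhds 0) := by
  refine (tendsto_log_pow_div_exp m one_pos).congr' ?_
  filter_upwards [eventually_gt_atTop 0] with n hn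
  rw [one_mul, Real.exp_log (by exact_mod_cast hn)]

theorem eventually_log_add_le {c δ : ℝ} (hδ : 0 < δ) {α : ℕ → ℝ} (hα : ∀ᶠ n in atTop, α n ≤ 0) :
    ∀ᶠ n : ℕ in atTop,
      Real.log n + c * Real.log (Real.log n) + α n ≤ (1 + δ) * Real.log n := by
  have hloglog : (fun n : ℕ => c * Real.log (Real.log n)) =o[atTop] fun n : ℕ => Real.log n :=
    (Real.isLittleO_log_id_atTop.comp_tendsto tendsto_log_natCast_atTop).const_mul_left c
  filter_upwards [hloglog.def hδ, hα, tendsto_log_natCast_atTop.eventually_ge_atTop 0]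
    with n hn hαn hlog
  rw [Real.norm_of_nonneg hlog] at hn
  linarith [Real.le_norm_self (c * Real.log (Real.log n))]

variable {q : ℕ → ℝ} {c : ℝ}

theorem tendsto_natCast_mul_pow_of_le_log (hq : ∀ n, 0 ≤ q n)
    (hle : ∀ᶠ n : ℕ in atTop, n * q n ≤ c * Real.log n) (m : ℕ) :
    Tendsto (fun n : ℕ => n ^ m * q n ^ (m + 1)) atTop (nhds 0) := by
  have h := (tendsto_log_pow_div_natCast (m + 1)).const_mul (c ^ (m + 1))
  rw [mul_zero] at h
  refine squeeze_zero' (.of_forall fun n => mul_nonneg (by positivity) (pow_nonneg (hq n) _)) ?_ h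
  filter_upwards [hle, eventually_gt_atTop 0] with n hn hpos
  have hn0 : (0 : ℝ) < n := by exact_mod_cast hpos
  have := mul_nonneg hn0.le (hq n)
  rw [← mul_div_assoc, le_div_iff₀ hn0, ← mul_pow]
  calc (n : ℝ) ^ m * q n ^ (m + 1) * n = (n * q n) ^ (m + 1) := by ring
    _ ≤ (c * Real.log n) ^ (m + 1) := by gcongr

theorem mul_exp_le_add_of_le {s p l c : ℝ} (hs : 0 ≤ s) (hp : p ≤ 1) (hl : 0 ≤ l) (hc : 0 ≤ c)
    (h : p * (Real.exp l * s) ≤ c * l) :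
    s * Real.exp (2 / 3 * (p * l)) ≤
      Real.exp 1 * s + c * (l ^ 2 / Real.exp (1 / 3 * l)) := by
  rcases le_total (p * l) 1 with hpl | hpl
  · calc s * Real.exp (2 / 3 * (p * l)) ≤ s * Real.exp 1 := by gcongr; linarith
      _ = Real.exp 1 * s := mul_comm _ _
      _ ≤ _ := le_add_of_nonneg_right (by positivity)
  · have hsle : s * Real.exp l ≤ c * l ^ 2 := by
      calc s * Real.exp l ≤ s * Real.exp l * (p * l) := le_mul_of_one_le_right (by positivity) hpl
        _ = p * (Real.exp l * s) * l := by ring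
        _ ≤ c * l * l := by gcongr
        _ = c * l ^ 2 := by ring
    have hexp : Real.exp (2 / 3 * (p * l)) * Real.exp (1 / 3 * l) ≤ Real.exp l := by
      rw [← Real.exp_add]
      exact Real.exp_le_exp.2 (by nlinarith)
    refine le_add_of_nonneg_of_le (by positivity) ?_
    rw [← mul_div_assoc, le_div_iff₀ (Real.exp_pos _), mul_assoc]
    exact (mul_le_mul_of_nonneg_left hexp hs).trans hsle

theorem tendsto_mul_exp_of_le {s p : ℕ → ℝ} (hs : ∀ n, 0 ≤ s n) (hs0 : Tendsto s atTop (nhds 0))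
    (hp : ∀ n, p n ≤ 1) (hc : 0 ≤ c)
    (hle : ∀ᶠ n : ℕ in atTop, p n * (n * s n) ≤ c * Real.log n) :
    Tendsto (fun n : ℕ => s n * Real.exp (2 / 3 * (p n * Real.log n))) atTop (nhds 0) := by
  have hlim := (hs0.const_mul (Real.exp 1)).add
    ((tendsto_log_pow_div_exp 2 (by norm_num : (0 : ℝ) < 1 / 3)).const_mul c)
  rw [mul_zero, mul_zero, add_zero] at hlim
  refine squeeze_zero' (.of_forall fun n => mul_nonneg (hs n) (Real.exp_nonneg _)) ?_ hlim
  filter_upwards [hle, eventually_gt_atTop 0] with n hn hpos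
  refine mul_exp_le_add_of_le (hs n) (hp n) (Real.log_natCast_nonneg n) hc ?_
  rwa [Real.exp_log (by exact_mod_cast hpos)]

theorem min_exp_le_exp_mul_pow_mul_exp_neg {l x : ℝ} (hl : 0 < l) (hx : 0 ≤ x) (r : ℕ) :
    min (Real.exp (l / 2)) (Real.exp (-(x - l - r * Real.log l))) ≤
      2 ^ r * (Real.exp l * (1 + x) ^ r * Real.exp (-x)) := by
  rcases le_total x (l / 2) with h | h
  · calc min _ _ ≤ Real.exp (l / 2) := min_le_left _ _
      _ ≤ Real.exp l * Real.exp (-x) := by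
          rw [← Real.exp_add]
          exact Real.exp_le_exp.2 (by linarith)
      _ ≤ 2 ^ r * (1 + x) ^ r * (Real.exp l * Real.exp (-x)) :=
          le_mul_of_one_le_left (by positivity)
            (one_le_mul_of_one_le_of_one_le (one_le_pow₀ one_le_two) (one_le_pow₀ (by linarith)))
      _ = _ := by ring
  · calc min _ _ ≤ Real.exp (-(x - l - r * Real.log l)) := min_le_right _ _
      _ = l ^ r * (Real.exp l * Real.exp (-x)) := by
          rw [← Real.exp_log (pow_pos hl r), Real.log_pow, ← Real.exp_add, ← Real.exp_add]
          ring_nf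
      _ ≤ (2 * (1 + x)) ^ r * (Real.exp l * Real.exp (-x)) := by
          gcongr
          linarith
      _ = _ := by rw [mul_pow]; ring

theorem min_exp_le_mul_partialBinomialSum {q : ℝ} {M r : ℕ} (h0 : 0 ≤ q) (h1 : q ≤ 1 / 2)
    (hM : 2 * r ≤ M + 1) (hsq : (M + 1 : ℕ) * q ^ 2 ≤ 1 / 2) (hl : 0 < Real.log (M + 1 : ℕ)) :
    min (Real.exp (Real.log (M + 1 : ℕ) / 2)) (Real.exp (-((M + 1 : ℕ) * q -
        Real.log (M + 1 : ℕ) - r * Real.log (Real.log (M + 1 : ℕ))))) ≤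
      Real.exp 1 * 4 ^ r * r.factorial *
        ((M + 1 : ℕ) * partialBinomialSum (1 - q) q M (r + 1)) := by
  have hsum := le_partialBinomialSum h0 (by linarith) hM
  have hexp : Real.exp (-((M + 1 : ℕ) * q)) ≤ Real.exp 1 * (1 - q) ^ M := by
    calc Real.exp (-((M + 1 : ℕ) * q))
        ≤ Real.exp 1 * Real.exp (-((M + 1 : ℕ) * q + 2 * ((M + 1 : ℕ) * q ^ 2))) := by
          rw [← Real.exp_add]
          exact Real.exp_le_exp.2 (by linarith)
      _ ≤ Real.exp 1 * (1 - q) ^ (M + 1) := by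
          gcongr
          exact exp_neg_add_le_one_sub_pow h1 _
      _ ≤ Real.exp 1 * (1 - q) ^ M := by
          gcongr Real.exp 1 * ?_
          exact pow_le_pow_of_le_one (by linarith) (by linarith) M.le_succ
  refine (min_exp_le_exp_mul_pow_mul_exp_neg hl (by positivity) r).trans ?_
  rw [Real.exp_log (by positivity)]
  push_cast at hexp ⊢
  calc (2 : ℝ) ^ r * ((M + 1) * (1 + (M + 1) * q) ^ r * Real.exp (-((M + 1) * q)))
      ≤ 2 ^ r * ((M + 1) * (1 + (M + 1) * q) ^ r * (Real.exp 1 * (1 - q) ^ M)) := by gcongr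
    _ = Real.exp 1 * 2 ^ r * ((M + 1) * ((1 + (M + 1) * q) ^ r * (1 - q) ^ M)) := by ring
    _ ≤ Real.exp 1 * 2 ^ r * ((M + 1) *
          (2 ^ r * r.factorial * partialBinomialSum (1 - q) q M (r + 1))) := by gcongr
    _ = _ := by
        rw [show (4 : ℝ) ^ r = 2 ^ r * 2 ^ r by rw [← mul_pow]; norm_num]
        ring

theorem tendsto_mul_partialBinomialSum_atTop {r : ℕ} {α : ℕ → ℝ} (hq : ∀ n, 0 ≤ q n)
    (hle : ∀ᶠ n : ℕ in atTop, n * q n ≤ c * Real.log n)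
    (hα : ∀ᶠ n : ℕ in atTop, n * q n = Real.log n + r * Real.log (Real.log n) + α n)
    (hαbot : Tendsto α atTop atBot) :
    Tendsto (fun n : ℕ => n * partialBinomialSum (1 - q n) (q n) (n - 1) (r + 1)) atTop atTop := by
  have hq0 := tendsto_natCast_mul_pow_of_le_log hq hle 0
  have hsq := tendsto_natCast_mul_pow_of_le_log hq hle 1
  simp only [pow_zero, zero_add, pow_one, one_mul, one_add_one_eq_two] at hq0 hsq
  have hmin : Tendsto (fun n : ℕ => min (Real.exp (Real.log n / 2)) (Real.exp (-α n)))
      atTop atTop := by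
    refine tendsto_atTop.2 fun b => ?_
    filter_upwards [(Real.tendsto_exp_atTop.comp (tendsto_log_natCast_atTop.atTop_div_const
        two_pos)).eventually_ge_atTop b,
      (Real.tendsto_exp_atTop.comp (tendsto_neg_atBot_atTop.comp hαbot)).eventually_ge_atTop b]
      with n h₁ h₂ using le_min h₁ h₂
  have hpos : 0 < Real.exp 1 * 4 ^ r * (r.factorial : ℝ) := by positivity
  rw [← tendsto_const_mul_atTop_of_pos hpos]
  refine tendsto_atTop_mono' _ ?_ hmin
  filter_upwards [hα, tendsto_log_natCast_atTop.eventually_gt_atTop 0,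
    hq0.eventually_le_const (by norm_num : (0 : ℝ) < 1 / 2),
    hsq.eventually_le_const (by norm_num : (0 : ℝ) < 1 / 2),
    eventually_ge_atTop (2 * r), eventually_ge_atTop 1] with n hαn hlog hqn hsqn hr hn
  obtain ⟨M, rfl⟩ := Nat.exists_eq_add_of_le' hn
  rw [show α (M + 1) = (M + 1 : ℕ) * q (M + 1) - Real.log (M + 1 : ℕ) -
    r * Real.log (Real.log (M + 1 : ℕ)) by linarith]
  exact min_exp_le_mul_partialBinomialSum (hq _) hqn hr hsqn hlog

end LogarithmicAsymptotics

section ZeroLaw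

theorem tendsto_zeroLawBound {M q t : ℕ → ℝ} (hM : Tendsto M atTop atTop)
    (hq : Tendsto q atTop (nhds 0)) (ht : Tendsto t atTop (nhds 0)) (m : ℕ) (C : ℝ) :
    Tendsto (fun n => 1 / M n + ((1 - q n)⁻¹ ^ 2 * ((1 - q n)⁻¹ ^ m +
      C * (Real.exp 1 * t n + t n ^ 2)) - 1)) atTop (nhds 0) := by
  have hinv : Tendsto (fun n => (1 - q n)⁻¹) atTop (nhds 1) := by
    simpa using (hq.const_sub 1).inv₀ (by norm_num)
  have hcor : Tendsto (fun n => C * (Real.exp 1 * t n + t n ^ 2)) atTop (nhds 0) := by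
    simpa using ((ht.const_mul (Real.exp 1)).add (ht.pow 2)).const_mul C
  simpa using ((tendsto_const_nhds (x := (1 : ℝ))).div_atTop hM).add
    (((hinv.pow 2).mul ((hinv.pow m).add hcor)).sub_const 1)

variable {K P : ℕ → ℕ} {p : ℕ → ℝ} {r : ℕ} {α : ℕ → ℝ}
  (hKP : ∀ n, K n ≤ P n) (hp0 : ∀ n, 0 ≤ p n) (hp1 : ∀ n, p n ≤ 1)
  (hKsq : Tendsto (fun n => (K n : ℝ) ^ 2 / P n) atTop (nhds 0))
include hKP hp0 hp1 hKsq

theorem tendsto_sq_div_mul_exp {c : ℝ} (hc : 0 ≤ c)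
    (hle : ∀ᶠ n : ℕ in atTop, n * pef (K n) (P n) (p n) ≤ c * Real.log n) :
    Tendsto (fun n : ℕ => (K n : ℝ) ^ 2 / P n * Real.exp (2 / 3 * (p n * Real.log n)))
      atTop (nhds 0) := by
  refine tendsto_mul_exp_of_le (fun n => by positivity) hKsq hp1 (c := 11 / 10 * c)
    (by positivity) ?_
  filter_upwards [hle, hKsq.eventually_le_const (by norm_num : (0 : ℝ) < 1 / 10)] with n hn hs
  calc p n * (n * ((K n : ℝ) ^ 2 / P n)) = n * (p n * ((K n : ℝ) ^ 2 / P n)) := mul_left_comm _ _ _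
    _ ≤ n * (11 / 10 * pef (K n) (P n) (p n)) :=
        mul_le_mul_of_nonneg_left (mul_sq_div_le_mul_pef (hKP n) (hp0 n) hs) n.cast_nonneg
    _ ≤ 11 / 10 * c * Real.log n := by linarith

theorem tendsto_gonMeasure_real_forall_le_gDeg (hK2 : ∀ᶠ n in atTop, 2 ≤ K n)
    (hα : ∀ᶠ n : ℕ in atTop, n * pef (K n) (P n) (p n) =
      Real.log n + r * Real.log (Real.log n) + α n)
    (hαbot : Tendsto α atTop atBot) :
    Tendsto (fun n => (gonMeasure n (K n) (P n) (p n)).real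
      {ω | ∀ v, r + 1 ≤ gDeg (gonGraph ω) v}) atTop (nhds 0) := by
  have hq0 : ∀ n, 0 ≤ pef (K n) (P n) (p n) := fun n => mul_nonneg (hp0 n) psf_nonneg
  have hle : ∀ᶠ n : ℕ in atTop, n * pef (K n) (P n) (p n) ≤ 11 / 10 * Real.log n := by
    filter_upwards [hα, eventually_log_add_le (c := r) (by norm_num : (0 : ℝ) < 1 / 10)
      (hαbot.eventually_le_atBot 0)] with n hn hlog
    linarith
  have hq := tendsto_natCast_mul_pow_of_le_log hq0 hle 0
  have hsq := tendsto_natCast_mul_pow_of_le_log hq0 hle 1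
  simp only [pow_zero, zero_add, pow_one, one_mul, one_add_one_eq_two] at hq hsq
  refine squeeze_zero' (.of_forall fun _ => measureReal_nonneg) ?_
    (tendsto_zeroLawBound (tendsto_mul_partialBinomialSum_atTop hq0 hle hα hαbot) hq
      (tendsto_sq_div_mul_exp hKP hp0 hp1 hKsq (by norm_num) hle)
      (2 * (r + 1)) (64 ^ r * r.factorial ^ 2))
  filter_upwards [hK2, hle, hq.eventually_le_const (by norm_num : (0 : ℝ) < 1 / 40),
    hsq.eventually_le_const (by norm_num : (0 : ℝ) < 1 / 2),
    hKsq.eventually_le_const (by norm_num : (0 : ℝ) < 1 / 10), eventually_ge_atTop (2 * r + 2)]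
    with n hK2n hlen hqn hsqn hs hn
  obtain ⟨N, rfl⟩ := Nat.exists_eq_add_of_le' (le_of_add_le_right hn)
  refine (gonMeasure_real_forall_le_gDeg_le (hKP _) (hp0 _) (hp1 _) hqn (by omega)).trans ?_
  have hN : (N : ℝ) ≤ (N + 2 : ℕ) := by exact_mod_cast Nat.le_add_right N 2
  have hcor := sharedKeyCorrection_le hK2n (hKP _) (hp0 _) hs
    ((mul_le_mul_of_nonneg_right hN (hq0 _)).trans hlen)
    ((mul_le_mul_of_nonneg_right hN (sq_nonneg _)).trans hsqn)
  have : 0 ≤ (1 - pef (K (N + 2)) (P (N + 2)) (p (N + 2)))⁻¹ := inv_nonneg.2 (by linarith)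
  refine add_le_add le_rfl ?_
  gcongr

end ZeroLaw

theorem gon_zero_law_general
    (k : ℕ) (hk : 1 ≤ k) (K P : ℕ → ℕ) (p : ℕ → ℝ)
    (hKP : ∀ n, K n ≤ P n) (hp0 : ∀ n, 0 ≤ p n) (hp1 : ∀ n, p n ≤ 1)
    (hK2 : ∀ᶠ n : ℕ in atTop, 2 ≤ K n)
    (hKsq : Tendsto (fun n : ℕ => ((K n : ℝ)) ^ 2 / (P n : ℝ)) atTop (nhds 0))
    (α : ℕ → ℝ)
    (hα : ∀ n, 1 ≤ n → pef (K n) (P n) (p n) =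
      (Real.log n + ((k : ℝ) - 1) * Real.log (Real.log n) + α n) / (n : ℝ))
    (hαbot : Tendsto α atTop atBot) :
    Tendsto (fun n : ℕ => gonMeasure n (K n) (P n) (p n)
        {ω | KConnected (gonGraph ω) k}) atTop (nhds 0) ∧
    Tendsto (fun n : ℕ => gonMeasure n (K n) (P n) (p n)
        {ω | k ≤ minDeg (gonGraph ω)}) atTop (nhds 0) := by
  have hprob n := isProbabilityMeasure_gonMeasure (n := n) (hKP n) (hp0 n) (hp1 n)
  obtain ⟨r, rfl⟩ := Nat.exists_eq_add_of_le' hk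
  have hmean : ∀ᶠ n : ℕ in atTop, n * pef (K n) (P n) (p n) =
      Real.log n + r * Real.log (Real.log n) + α n := by
    filter_upwards [eventually_ge_atTop 1] with n hn
    rw [hα n hn, mul_div_cancel₀ _ (by positivity), Nat.cast_succ, add_sub_cancel_right]
  have hdeg : Tendsto (fun n : ℕ => gonMeasure n (K n) (P n) (p n)
      {ω | ∀ v, r + 1 ≤ gDeg (gonGraph ω) v}) atTop (nhds 0) :=
    (ENNReal.tendsto_toReal_iff (fun _ => measure_ne_top _ _) ENNReal.zero_ne_top).1
      (tendsto_gonMeasure_real_forall_le_gDeg hKP hp0 hp1 hKsq hK2 hmean hαbot)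
  constructor
  · refine tendsto_of_tendsto_of_tendsto_of_le_of_le' tendsto_const_nhds hdeg
      (.of_forall fun _ => zero_le) ?_
    filter_upwards [eventually_gt_atTop (r + 1)] with n hn
    exact measure_mono fun ω hω v => hω.le_gDeg (by simpa using hn) v
  · refine hdeg.congr' ?_
    filter_upwards [eventually_gt_atTop 0] with n hn
    have : Nonempty (Fin n) := ⟨⟨0, hn⟩⟩
    simp only [le_minDeg_iff]

/-- zero-law for `k`-connectivity and minimum degree in `𝔾_on`. -/
theorem gon_zero_law
    (k : ℕ) (hk : 1 ≤ k) (K P : ℕ → ℕ) (p : ℕ → ℝ)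
    (hKP : ∀ n, K n ≤ P n) (hp0 : ∀ n, 0 < p n) (hp1 : ∀ n, p n < 1)
    (hK2 : ∀ᶠ n : ℕ in atTop, 2 ≤ K n)
    (hKsq : Tendsto (fun n : ℕ => ((K n : ℝ)) ^ 2 / (P n : ℝ)) atTop (nhds 0))
    (α : ℕ → ℝ)
    (hα : ∀ n, 1 ≤ n → pef (K n) (P n) (p n) =
      (Real.log n + ((k : ℝ) - 1) * Real.log (Real.log n) + α n) / (n : ℝ))
    (hdeg : (∃ ε : ℝ, 0 < ε ∧ ∀ᶠ n : ℕ in atTop, ε < (n : ℝ) * pef (K n) (P n) (p n)) ∨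
      Tendsto (fun n : ℕ => (n : ℝ) * pef (K n) (P n) (p n)) atTop (nhds 0))
    (hαbot : Tendsto α atTop atBot) :
    Tendsto (fun n : ℕ => gonMeasure n (K n) (P n) (p n)
        {ω | KConnected (gonGraph ω) k}) atTop (nhds 0) ∧
    Tendsto (fun n : ℕ => gonMeasure n (K n) (P n) (p n)
        {ω | k ≤ minDeg (gonGraph ω)}) atTop (nhds 0) :=
  gon_zero_law_general k hk K P p hKP (fun n => (hp0 n).le) (fun n => (hp1 n).le) hK2 hKsq α hα
    hαbot
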